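/- Assume G > 0, where G = m − A^o is the Azéma supermartingale of θ, with m the martingale part and A^o the dual optional projection of 1_{⟦θ,∞⟦}. Set Γ := G̃^{-1} • A^o and m̃ := m − G̃^{-1} • [m,m], where G̃ = m − A^o_−. Then the process G^{-1} satisfies the semimartingale decomposition G^{-1} = G_0^{-1} − G_−^{-2} • m̃ + G^{-1} • Γ; i.e. for all t, 1/G_t = 1/G_0 − ∫_{(0,t]} G_{s−}^{-2} dm̃_s + ∫_{(0,t]} G_s^{-1} dΓ_s. -/

import Mathlib

open MeasureTheory Filter Set Function

/-- A sequence of partitions of `[a,b]` with mesh tending to zero. -/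
structure PartitionSeq (a b : ℝ) where
  num : ℕ → ℕ
  pt : ℕ → ℕ → ℝ
  first : ∀ k, pt k 0 = a
  last : ∀ k, pt k (num k) = b
  mono : ∀ k, Monotone (pt k)
  mesh : ∀ ε > (0 : ℝ), ∀ᶠ k in atTop, ∀ i < num k, pt k (i + 1) - pt k i < ε

/-- Left-endpoint Riemann–Stieltjes sum of `H` against `F`. -/
noncomputable def leftSum {a b : ℝ} (P : PartitionSeq a b) (H F : ℝ → ℝ) (k : ℕ) : ℝ :=
  ∑ i ∈ Finset.range (P.num k), H (P.pt k i) * (F (P.pt k (i + 1)) - F (P.pt k i))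

/-- Sum of products of increments (approximating the quadratic covariation). -/
noncomputable def prodSum {a b : ℝ} (P : PartitionSeq a b) (X Y : ℝ → ℝ) (k : ℕ) : ℝ :=
  ∑ i ∈ Finset.range (P.num k),
    (X (P.pt k (i + 1)) - X (P.pt k i)) * (Y (P.pt k (i + 1)) - Y (P.pt k i))

variable {Ω : Type*}

/-- `J` is the stochastic integral `∫_(0,·] H_{s−} dX_s` (left-endpoint Riemann sums
converge in measure). -/
def IsStochInt {m0 : MeasurableSpace Ω} (μ : Measure Ω) (H X J : ℝ → Ω → ℝ) : Prop :=
  ∀ t : ℝ, 0 < t → ∀ P : PartitionSeq 0 t,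
    TendstoInMeasure μ (fun k ω => leftSum P (fun s => H s ω) (fun s => X s ω) k) atTop (J t)

/-- `B` is the quadratic covariation `[X,Y]`. -/
def IsQuadCovar {m0 : MeasurableSpace Ω} (μ : Measure Ω) (X Y B : ℝ → Ω → ℝ) : Prop :=
  ∀ t : ℝ, 0 < t → ∀ P : PartitionSeq 0 t,
    TendstoInMeasure μ (fun k ω => prodSum P (fun s => X s ω) (fun s => Y s ω) k) atTop (B t)

/-! On a cell `(u, v]` of a dyadic grid put `x = G_u`, `y = G_v`, `z = m_v - A_u`, `d = m_v - m_u`,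
`a = A_v - A_u`, `q = [m,m]_v - [m,m]_u`. Since `z = x + d = y + a`,
`y⁻¹ - x⁻¹ = x⁻² z⁻¹ (d² - q) + x⁻² (z⁻¹ q - d) + y⁻¹ z⁻¹ a`. As the cell shrinks, `z` tends
to `G̃`, so the last terms sum to `∫ G⁻¹ G̃⁻¹ dA` and the middle ones differ from a left Riemann sum
of `-G₋⁻² • m̃` by a quantity tending to zero, both by dominated convergence.

What remains is `∑ x⁻² z⁻¹ (d² - q) → 0`. The weights are bounded and, the paths being càdlàg, their
number of oscillations larger than `ε` is bounded in the mesh; by summation by parts it suffices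
that the partial sums of `d² - q` tend to zero uniformly along the grid. At a single time this is
the definition of `[m,m]`. Uniformity follows by comparing the grid with a much finer one: the two
sums of squares differ by twice the sum of `(m_j - m_i) (m_{j+1} - m_j)`, with `i` the last
coarse point before `j`. Splitting `m_j` into its value at the last `ε`-oscillation and a remainder
bounded by `ε`, the former contributes, after summation by parts, boundedly many terms, which vanish
because `m` is càdlàg, and the latter is controlled by a maximal inequality. As `m ≥ A_0`,
truncating `c + A_0 - m` at zero reduces all this to bounded nonnegative submartingales. -/

/-- The maximum of `|S 0|, …, |S N|`, used for maximal inequalities along a grid. -/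
noncomputable def runningMax (S : ℕ → ℝ) (N : ℕ) : ℝ :=
  (Finset.range (N + 1)).sup' Finset.nonempty_range_add_one fun J => |S J|

/-- The piecewise constant approximation of `X` that jumps to the current value of `X` as soon as
it is more than `ε` away from it. -/
noncomputable def resetValue (ε : ℝ) (X : ℕ → ℝ) : ℕ → ℝ
  | 0 => X 0
  | j + 1 => if ε < |X (j + 1) - resetValue ε X j| then X (j + 1) else resetValue ε X j

open Classical in
/-- The number of jumps of `resetValue ε X` up to index `N`. -/
noncomputable def resetCount (ε : ℝ) (X : ℕ → ℝ) (N : ℕ) : ℕ :=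
  ((Finset.range N).filter fun j => ε < |X (j + 1) - resetValue ε X j|).card

section RunningMax

variable {S : ℕ → ℝ} {J N : ℕ} {l : ℝ}

lemma lt_runningMax_iff : l < runningMax S N ↔ ∃ J ≤ N, l < |S J| := by
  simp [runningMax, Finset.lt_sup'_iff]

lemma runningMax_le_iff : runningMax S N ≤ l ↔ ∀ J ≤ N, |S J| ≤ l := by
  simpa using (lt_runningMax_iff (S := S) (N := N) (l := l)).not

lemma abs_le_runningMax (hJ : J ≤ N) : |S J| ≤ runningMax S N :=
  runningMax_le_iff.1 le_rfl J hJ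

lemma runningMax_nonneg : 0 ≤ runningMax S N :=
  (abs_nonneg _).trans (abs_le_runningMax N.zero_le)

lemma runningMax_congr {S' : ℕ → ℝ} (h : ∀ J ≤ N, S J = S' J) :
    runningMax S N = runningMax S' N :=
  Finset.sup'_congr _ rfl fun J hJ => by rw [h J (Nat.lt_succ_iff.1 (Finset.mem_range.1 hJ))]

lemma measurable_runningMax {Ω : Type*} [MeasurableSpace Ω] {S : ℕ → Ω → ℝ} (N : ℕ)
    (hS : ∀ J ≤ N, Measurable (S J)) : Measurable fun ω => runningMax (fun J => S J ω) N := by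
  have h := Finset.measurable_range_sup'' (n := N) (f := fun J ω => |S J ω|)
    fun J hJ => (hS J hJ).abs
  simpa only [runningMax] using h

/-- Stopping the summation once a partial sum exceeds `l` does not hide the exceedance. -/
lemma sum_ite_runningMax_dichotomy {D : ℕ → ℝ} (hl : 0 ≤ l)
    (hS : ∀ J, S J = ∑ j ∈ Finset.range J, D j) (N : ℕ) :
    (runningMax S N ≤ l → ∑ j ∈ Finset.range N, (if runningMax S j ≤ l then D j else 0) = S N) ∧
    (l < runningMax S N →
      l < |∑ j ∈ Finset.range N, if runningMax S j ≤ l then D j else 0|) := by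
  induction N with
  | zero =>
    refine ⟨fun _ => by simp [hS], fun h => ?_⟩
    obtain ⟨J, hJ, hlt⟩ := lt_runningMax_iff.1 h
    simp only [Nat.le_zero.1 hJ, hS, Finset.range_zero, Finset.sum_empty, abs_zero] at hlt
    exact absurd hlt hl.not_gt
  | succ N ih =>
    rw [Finset.sum_range_succ]
    rcases le_or_gt (runningMax S N) l with hN | hN
    · rw [if_pos hN, ih.1 hN, hS N, ← Finset.sum_range_succ, ← hS (N + 1)]
      refine ⟨fun _ => rfl, fun h => ?_⟩
      obtain ⟨J, hJ, hlt⟩ := lt_runningMax_iff.1 h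
      rcases hJ.lt_or_eq with hJN | rfl
      · exact absurd (runningMax_le_iff.1 hN J (Nat.lt_succ_iff.1 hJN)) hlt.not_ge
      · exact hlt
    · rw [if_neg hN.not_ge, add_zero]
      refine ⟨fun h => absurd (runningMax_le_iff.2 fun J hJ => ?_) hN.not_ge, fun _ => ih.2 hN⟩
      exact runningMax_le_iff.1 h J (hJ.trans N.le_succ)

end RunningMax

section Reset

variable {ε : ℝ} {X : ℕ → ℝ} {N : ℕ}

lemma abs_sub_resetValue_le (hε : 0 ≤ ε) (X : ℕ → ℝ) (j : ℕ) : |X j - resetValue ε X j| ≤ ε := by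
  cases j with
  | zero => simpa [resetValue] using hε
  | succ j =>
    rw [resetValue]
    split_ifs with h
    · simpa using hε
    · exact not_lt.1 h

lemma exists_resetValue_eq (ε : ℝ) (X : ℕ → ℝ) (j : ℕ) : ∃ i ≤ j, resetValue ε X j = X i := by
  induction j with
  | zero => exact ⟨0, le_rfl, rfl⟩
  | succ j ih =>
    rw [resetValue]
    split_ifs
    · exact ⟨j + 1, le_rfl, rfl⟩
    · obtain ⟨i, hij, hi⟩ := ih
      exact ⟨i, hij.trans j.le_succ, hi⟩

lemma measurable_resetValue {Ω : Type*} [MeasurableSpace Ω] (ε : ℝ) {X : ℕ → Ω → ℝ} (j : ℕ)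
    (hX : ∀ i ≤ j, Measurable (X i)) :
    Measurable fun ω => resetValue ε (fun i => X i ω) j := by
  induction j with
  | zero => exact hX 0 le_rfl
  | succ j ih =>
    have href := ih fun i hi => hX i (hi.trans j.le_succ)
    exact Measurable.ite (measurableSet_lt measurable_const ((hX _ le_rfl).sub href).abs)
      (hX _ le_rfl) href

lemma resetCount_succ (ε : ℝ) (X : ℕ → ℝ) (N : ℕ) : resetCount ε X (N + 1) =
    resetCount ε X N + if ε < |X (N + 1) - resetValue ε X N| then 1 else 0 := by
  classical
  simp only [resetCount, Finset.card_filter, Finset.sum_range_succ]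

/-- Every jump of `resetValue` raises a label whose level sets have `X`-oscillation at most `ε`. -/
lemma add_resetCount_le {label : ℕ → ℕ} (hmono : ∀ i j, i ≤ j → j ≤ N → label i ≤ label j)
    (hosc : ∀ i j, i ≤ j → j ≤ N → label i = label j → |X j - X i| ≤ ε) :
    label 0 + resetCount ε X N ≤ label N := by
  suffices ∀ j ≤ N, ∃ i ≤ j, resetValue ε X j = X i ∧ label 0 + resetCount ε X j ≤ label i by
    obtain ⟨i, hi, -, hle⟩ := this N le_rfl
    exact hle.trans (hmono i N hi le_rfl)
  intro j hj
  induction j with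
  | zero => exact ⟨0, le_rfl, rfl, by simp [resetCount]⟩
  | succ j ih =>
    obtain ⟨i, hij, hi, hle⟩ := ih (j.le_succ.trans hj)
    rw [resetCount_succ, resetValue]
    split_ifs with h
    · refine ⟨j + 1, le_rfl, rfl, ?_⟩
      rw [hi] at h
      have hne : label i ≠ label (j + 1) := fun heq =>
        (hosc i _ (hij.trans j.le_succ) hj heq).not_gt h
      have := hmono i _ (hij.trans j.le_succ) hj
      lia
    · exact ⟨i, hij.trans j.le_succ, hi, hle⟩

lemma sum_abs_resetValue_sub_mul_le {y : ℕ → ℝ} {B : ℝ}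
    (h : ∀ j < N, ε < |X (j + 1) - resetValue ε X j| →
      |X (j + 1) - resetValue ε X j| * y j ≤ B) :
    ∑ j ∈ Finset.range N, |resetValue ε X (j + 1) - resetValue ε X j| * y j
      ≤ B * resetCount ε X N := by
  rw [resetCount, Finset.card_filter, Nat.cast_sum, Finset.mul_sum]
  refine Finset.sum_le_sum fun j hj => ?_
  rw [resetValue]
  split_ifs with hlt
  · simpa using h j (Finset.mem_range.1 hj) hlt
  · simp

lemma sum_sub_mul_sub_eq_sum_sub_mul_sub {R : Type*} [CommRing R] (w X : ℕ → R) (N : ℕ) :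
    ∑ j ∈ Finset.range N, (w j - w 0) * (X (j + 1) - X j)
      = ∑ j ∈ Finset.range N, (w (j + 1) - w j) * (X N - X (j + 1)) := by
  induction N with
  | zero => simp
  | succ N ih =>
    have hsplit : ∑ j ∈ Finset.range N, (w (j + 1) - w j) * (X (N + 1) - X (j + 1))
        = ∑ j ∈ Finset.range N, (w (j + 1) - w j) * (X N - X (j + 1))
          + (w N - w 0) * (X (N + 1) - X N) := by
      rw [← Finset.sum_range_sub, Finset.sum_mul, ← Finset.sum_add_distrib]
      exact Finset.sum_congr rfl fun j _ => by ring
    rw [Finset.sum_range_succ, ih, Finset.sum_range_succ, hsplit, sub_self, mul_zero, add_zero]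

lemma abs_sum_resetValue_sub_mul_le {Y : ℕ → ℝ} {B : ℝ}
    (h : ∀ j < N, ε < |X (j + 1) - resetValue ε X j| →
      |X (j + 1) - resetValue ε X j| * |Y N - Y (j + 1)| ≤ B) :
    |∑ j ∈ Finset.range N, (resetValue ε X j - X 0) * (Y (j + 1) - Y j)|
      ≤ B * resetCount ε X N := by
  have habel := sum_sub_mul_sub_eq_sum_sub_mul_sub (resetValue ε X) Y N
  rw [resetValue] at habel
  rw [habel]
  refine (Finset.abs_sum_le_sum_abs _ _).trans ?_
  simp only [abs_mul]
  exact sum_abs_resetValue_sub_mul_le h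

lemma abs_sum_mul_sub_le {w S : ℕ → ℝ} {C M : ℝ} (hε : 0 ≤ ε)
    (hw : ∀ j ≤ N, |w j| ≤ C) (hS : ∀ j ≤ N, |S j| ≤ M) :
    |∑ j ∈ Finset.range N, w j * (S (j + 1) - S j)|
      ≤ ε * ∑ j ∈ Finset.range N, |S (j + 1) - S j|
        + 2 * C * M * (1 + 2 * resetCount ε w N) := by
  have hC : 0 ≤ C := (abs_nonneg _).trans (hw 0 N.zero_le)
  have : 0 ≤ M := (abs_nonneg _).trans (hS 0 N.zero_le)
  have hincr : ∀ j ≤ N, |S N - S j| ≤ 2 * M := fun j hj => by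
    have := abs_sub (S N) (S j)
    linarith [hS N le_rfl, hS j hj]
  have hnear : |∑ j ∈ Finset.range N, (w j - resetValue ε w j) * (S (j + 1) - S j)|
      ≤ ε * ∑ j ∈ Finset.range N, |S (j + 1) - S j| := by
    rw [Finset.mul_sum]
    refine (Finset.abs_sum_le_sum_abs _ _).trans (Finset.sum_le_sum fun j _ => ?_)
    rw [abs_mul]
    gcongr
    exact abs_sub_resetValue_le hε w j
  have hreset : |∑ j ∈ Finset.range N, (resetValue ε w j - w 0) * (S (j + 1) - S j)|
      ≤ 2 * C * (2 * M) * resetCount ε w N := by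
    refine abs_sum_resetValue_sub_mul_le fun j hj _ => ?_
    obtain ⟨i, hij, hi⟩ := exists_resetValue_eq ε w j
    gcongr
    · have := abs_sub (w (j + 1)) (w i)
      rw [hi]
      linarith [hw (j + 1) hj, hw i (by lia)]
    · exact hincr _ hj
  have hsplit : ∑ j ∈ Finset.range N, w j * (S (j + 1) - S j)
      = ∑ j ∈ Finset.range N, (w j - resetValue ε w j) * (S (j + 1) - S j)
        + ∑ j ∈ Finset.range N, (resetValue ε w j - w 0) * (S (j + 1) - S j)
        + w 0 * (S N - S 0) := by
    rw [← Finset.sum_range_sub, Finset.mul_sum, ← Finset.sum_add_distrib,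
      ← Finset.sum_add_distrib]
    exact Finset.sum_congr rfl fun j _ => by ring
  have hfirst : |w 0 * (S N - S 0)| ≤ C * (2 * M) := by
    rw [abs_mul]
    gcongr
    exacts [hw 0 N.zero_le, hincr 0 N.zero_le]
  rw [hsplit]
  refine (abs_add_three _ _ _).trans ?_
  linarith

end Reset

lemma sq_sum_mul_sub_le {V K : ℕ → ℝ} {ε : ℝ} (hK : ∀ j, |K j| ≤ ε) (N : ℕ) :
    (∑ j ∈ Finset.range N, K j * (V (j + 1) - V j)) ^ 2
      ≤ ∑ j ∈ Finset.range N,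
          (2 * (∑ i ∈ Finset.range j, K i * (V (i + 1) - V i)) * K j - 2 * ε ^ 2 * V j)
            * (V (j + 1) - V j)
        + ε ^ 2 * (V N ^ 2 - V 0 ^ 2) := by
  induction N with
  | zero => simp
  | succ N ih =>
    have hKsq : K N ^ 2 * (V (N + 1) - V N) ^ 2 ≤ ε ^ 2 * (V (N + 1) - V N) ^ 2 :=
      mul_le_mul_of_nonneg_right (sq_le_sq' (abs_le.1 (hK N)).1 (abs_le.1 (hK N)).2) (sq_nonneg _)
    rw [Finset.sum_range_succ, Finset.sum_range_succ]
    linarith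

/-- The square of a transform is dominated by a constant minus a nonnegative transform, because
`(ΔV)² = Δ(V²) - 2 V ΔV`. -/
lemma sq_sum_mul_sub_le_sub_sum {V K : ℕ → ℝ} {b ε l : ℝ} (hV0 : ∀ j, 0 ≤ V j)
    (hVb : ∀ j, V j ≤ b) (hK : ∀ j, |K j| ≤ ε) (hε : 0 ≤ ε) (hl : 0 ≤ l) (N : ℕ) :
    (∑ j ∈ Finset.range N, K j * (V (j + 1) - V j)) ^ 2
      ≤ 2 * l * ε * b + ε ^ 2 * b ^ 2 - ∑ j ∈ Finset.range N,
          (2 * (l * ε) - 2 * ((∑ i ∈ Finset.range j, K i * (V (i + 1) - V i)) * K j)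
            + 2 * ε ^ 2 * V j) * (V (j + 1) - V j) := by
  set s : ℕ → ℝ := fun J => ∑ j ∈ Finset.range J, K j * (V (j + 1) - V j)
  have hsum : ∑ j ∈ Finset.range N,
        (2 * (l * ε) - 2 * (s j * K j) + 2 * ε ^ 2 * V j) * (V (j + 1) - V j)
      = 2 * (l * ε) * (V N - V 0) - ∑ j ∈ Finset.range N,
        (2 * s j * K j - 2 * ε ^ 2 * V j) * (V (j + 1) - V j) := by
    rw [← Finset.sum_range_sub V, Finset.mul_sum, ← Finset.sum_sub_distrib]
    exact Finset.sum_congr rfl fun j _ => by ring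
  have hVN : l * ε * (V N - V 0) ≤ l * ε * b := by
    gcongr
    linarith [hVb N, hV0 0]
  have hVN2 : ε ^ 2 * (V N ^ 2 - V 0 ^ 2) ≤ ε ^ 2 * b ^ 2 := by
    gcongr
    linarith [pow_le_pow_left₀ (hV0 N) (hVb N) 2, sq_nonneg (V 0)]
  rw [hsum]
  linarith [sq_sum_mul_sub_le (V := V) hK N]

section Submartingale

variable {m0 : MeasurableSpace Ω} {μ : Measure Ω}

lemma integral_sum_mul_sub_nonneg [IsFiniteMeasure μ] {𝒢 : Filtration ℕ m0} {V ξ : ℕ → Ω → ℝ}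
    {R : ℝ} (hV : Submartingale V 𝒢 μ) (hξ : StronglyAdapted 𝒢 ξ) (hξ0 : ∀ j ω, 0 ≤ ξ j ω)
    (hξR : ∀ j ω, ξ j ω ≤ R) (N : ℕ) :
    Integrable (fun ω => ∑ j ∈ Finset.range N, ξ j ω * (V (j + 1) ω - V j ω)) μ ∧
      0 ≤ ∫ ω, ∑ j ∈ Finset.range N, ξ j ω * (V (j + 1) ω - V j ω) ∂μ := by
  have hsub := hV.sum_mul_sub hξ hξR hξ0
  have hle := hsub.setIntegral_le (Nat.zero_le N) MeasurableSet.univ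
  have h_int := hsub.integrable N
  simp only [Finset.sum_fn, Pi.mul_apply, Pi.sub_apply, Pi.zero_apply, Measure.restrict_univ,
    Finset.range_zero, Finset.sum_empty, integral_zero] at h_int hle
  exact ⟨h_int, hle⟩

lemma measurable_sum_mul_sub {𝒢 : Filtration ℕ m0} {V K : ℕ → Ω → ℝ}
    (hV : StronglyAdapted 𝒢 V) (hK : StronglyAdapted 𝒢 K) {i j : ℕ} (hij : i ≤ j) :
    Measurable[𝒢 j] fun ω => ∑ a ∈ Finset.range i, K a ω * (V (a + 1) ω - V a ω) := by
  have hmeas : ∀ {L : ℕ → Ω → ℝ}, StronglyAdapted 𝒢 L → ∀ a ≤ j, Measurable[𝒢 j] (L a) :=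
    fun hL a ha => (hL a).measurable.mono (𝒢.mono ha) le_rfl
  refine Finset.measurable_fun_sum _ fun a ha => ?_
  have haj : a + 1 ≤ j := (Finset.mem_range.1 ha).trans_le hij
  exact (hmeas hK a (a.le_succ.trans haj)).mul
    ((hmeas hV _ haj).sub (hmeas hV a (a.le_succ.trans haj)))

lemma sq_mul_measureReal_lt_abs_sum_le [IsFiniteMeasure μ] {𝒢 : Filtration ℕ m0}
    {V K : ℕ → Ω → ℝ} {b ε l : ℝ} (hV : Submartingale V 𝒢 μ) (hV0 : ∀ j ω, 0 ≤ V j ω)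
    (hVb : ∀ j ω, V j ω ≤ b) (hK : StronglyAdapted 𝒢 K) (hKε : ∀ j ω, |K j ω| ≤ ε)
    (hε : 0 ≤ ε) (hl : 0 ≤ l)
    (hsK : ∀ j ω, |(∑ i ∈ Finset.range j, K i ω * (V (i + 1) ω - V i ω)) * K j ω| ≤ l * ε)
    (N : ℕ) :
    l ^ 2 * μ.real {ω | l < |∑ j ∈ Finset.range N, K j ω * (V (j + 1) ω - V j ω)|}
      ≤ (2 * l * ε * b + ε ^ 2 * b ^ 2) * μ.real univ := by
  set s : ℕ → Ω → ℝ := fun J ω => ∑ j ∈ Finset.range J, K j ω * (V (j + 1) ω - V j ω)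
  let ξ : ℕ → Ω → ℝ := fun j ω => 2 * (l * ε) - 2 * (s j ω * K j ω) + 2 * ε ^ 2 * V j ω
  have hξ : StronglyAdapted 𝒢 ξ := fun j => Measurable.stronglyMeasurable <|
    (measurable_const.sub (((measurable_sum_mul_sub hV.stronglyAdapted hK le_rfl).mul
      (hK j).measurable).const_mul 2)).add ((hV.stronglyAdapted j).measurable.const_mul _)
  have hξ0 : ∀ j ω, 0 ≤ ξ j ω := fun j ω => by
    have := mul_nonneg (sq_nonneg ε) (hV0 j ω)
    simp only [ξ]
    linarith [(abs_le.1 (hsK j ω)).2]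
  have hξR : ∀ j ω, ξ j ω ≤ 4 * (l * ε) + 2 * ε ^ 2 * b := fun j ω => by
    have := mul_le_mul_of_nonneg_left (hVb j ω) (sq_nonneg ε)
    simp only [ξ]
    linarith [(abs_le.1 (hsK j ω)).1]
  obtain ⟨h_int, hnonneg⟩ := integral_sum_mul_sub_nonneg hV hξ hξ0 hξR N
  let f : Ω → ℝ := fun ω => 2 * l * ε * b + ε ^ 2 * b ^ 2
    - ∑ j ∈ Finset.range N, ξ j ω * (V (j + 1) ω - V j ω)
  have hsf : ∀ ω, s N ω ^ 2 ≤ f ω := fun ω =>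
    sq_sum_mul_sub_le_sub_sum (fun j => hV0 j ω) (fun j => hVb j ω) (fun j => hKε j ω) hε hl N
  have hsubset : {ω | l < |s N ω|} ⊆ {ω | l ^ 2 ≤ f ω} := fun ω hω =>
    (sq_abs (s N ω) ▸ pow_le_pow_left₀ hl (le_of_lt hω) 2).trans (hsf ω)
  calc l ^ 2 * μ.real {ω | l < |s N ω|}
      ≤ l ^ 2 * μ.real {ω | l ^ 2 ≤ f ω} := by gcongr; exact measure_ne_top _ _
    _ ≤ ∫ ω, f ω ∂μ := mul_meas_ge_le_integral_of_nonneg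
        (.of_forall fun ω => (sq_nonneg _).trans (hsf ω)) ((integrable_const _).sub h_int) _
    _ ≤ (2 * l * ε * b + ε ^ 2 * b ^ 2) * μ.real univ := by
        rw [integral_sub (integrable_const _) h_int, integral_const, smul_eq_mul, mul_comm]
        linarith

lemma sq_mul_measureReal_lt_runningMax_le [IsFiniteMeasure μ] {𝒢 : Filtration ℕ m0}
    {V K : ℕ → Ω → ℝ} {b ε l : ℝ} (hV : Submartingale V 𝒢 μ) (hV0 : ∀ j ω, 0 ≤ V j ω)
    (hVb : ∀ j ω, V j ω ≤ b) (hK : StronglyAdapted 𝒢 K) (hKε : ∀ j ω, |K j ω| ≤ ε)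
    (hε : 0 ≤ ε) (hl : 0 ≤ l) (N : ℕ) :
    l ^ 2 * μ.real {ω | l < runningMax
        (fun J => ∑ j ∈ Finset.range J, K j ω * (V (j + 1) ω - V j ω)) N}
      ≤ (2 * l * ε * b + ε ^ 2 * b ^ 2) * μ.real univ := by
  set S : Ω → ℕ → ℝ := fun ω J => ∑ j ∈ Finset.range J, K j ω * (V (j + 1) ω - V j ω)
  let K' : ℕ → Ω → ℝ := fun j ω => if runningMax (S ω) j ≤ l then K j ω else 0
  have hK' : StronglyAdapted 𝒢 K' := fun j => Measurable.stronglyMeasurable <|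
    Measurable.ite (measurableSet_le (@measurable_runningMax Ω (𝒢 j) _ j fun i hi =>
      measurable_sum_mul_sub hV.stronglyAdapted hK hi) measurable_const)
      (hK j).measurable measurable_const
  have hK'ε : ∀ j ω, |K' j ω| ≤ ε := fun j ω => by
    simp only [K']
    split_ifs
    exacts [hKε j ω, by simpa using hε]
  have h_trans : ∀ ω J, ∑ j ∈ Finset.range J, K' j ω * (V (j + 1) ω - V j ω)
      = ∑ j ∈ Finset.range J,
        if runningMax (S ω) j ≤ l then K j ω * (V (j + 1) ω - V j ω) else 0 := fun ω J =>
    Finset.sum_congr rfl fun j _ => by simp only [K', ite_mul, zero_mul]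
  have hsK' : ∀ j ω,
      |(∑ i ∈ Finset.range j, K' i ω * (V (i + 1) ω - V i ω)) * K' j ω| ≤ l * ε := fun j ω => by
    by_cases hj : runningMax (S ω) j ≤ l
    · rw [abs_mul, h_trans, (sum_ite_runningMax_dichotomy hl (fun _ => rfl) j).1 hj]
      gcongr
      exacts [runningMax_le_iff.1 hj j le_rfl, hK'ε j ω]
    · simp only [K', if_neg hj, mul_zero, abs_zero]
      positivity
  refine le_trans ?_ (sq_mul_measureReal_lt_abs_sum_le hV hV0 hVb hK' hK'ε hε hl hsK' N)
  refine mul_le_mul_of_nonneg_left (measureReal_mono fun ω hω => ?_) (sq_nonneg l)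
  rw [mem_ofPred_eq, h_trans]
  exact (sum_ite_runningMax_dichotomy hl (fun _ => rfl) N).2 hω

end Submartingale

section Grid

variable {m0 : MeasurableSpace Ω} {μ : Measure Ω}

/-- The filtration `𝒻` observed along the grid `0, h, 2 * h, …`, to transfer continuous-time
submartingales to discrete time. -/
def gridFiltration (𝒻 : Filtration ℝ m0) {h : ℝ} (hh : 0 ≤ h) : Filtration ℕ m0 where
  seq j := 𝒻 (j * h)
  mono' i j hij := 𝒻.mono (by gcongr)
  le' j := 𝒻.le _

lemma submartingale_grid {𝒻 : Filtration ℝ m0} {V : ℝ → Ω → ℝ} (hV : Submartingale V 𝒻 μ) {h : ℝ}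
    (hh : 0 ≤ h) : Submartingale (fun j : ℕ => V (j * h)) (gridFiltration 𝒻 hh) μ :=
  ⟨fun j => hV.stronglyAdapted _, fun i j hij => hV.ae_le_condExp (by gcongr : (i : ℝ) * h ≤ j * h),
    fun j => hV.integrable _⟩

lemma submartingale_max_sub_add [IsFiniteMeasure μ] {ι : Type*} [Preorder ι]
    {𝒻 : Filtration ι m0} {m A : ι → Ω → ℝ} (hm : Martingale m 𝒻 μ) (hA : Adapted 𝒻 A)
    (hA_mono : ∀ ω, Monotone fun i => A i ω) (hAm : ∀ i ω, A i ω ≤ m i ω) (c : ℝ) :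
    Submartingale (fun i ω => max (c - m i ω + A i ω) 0) 𝒻 μ := by
  set V : ι → Ω → ℝ := fun i ω => max (c - m i ω + A i ω) 0
  have hVmeas : ∀ i, Measurable[𝒻 i] (V i) := fun i =>
    ((measurable_const.sub (hm.stronglyAdapted i).measurable).add (hA i)).max measurable_const
  have hVint : ∀ i, Integrable (V i) μ := fun i => by
    refine .of_bound ((hVmeas i).mono (𝒻.le i) le_rfl).aestronglyMeasurable |c| (.of_forall ?_)
    intro ω
    rw [Real.norm_of_nonneg (le_max_right _ _)]
    exact max_le (by linarith [hAm i ω, le_abs_self c]) (abs_nonneg c)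
  refine submartingale_of_setIntegral_le (fun i => (hVmeas i).stronglyMeasurable) hVint
    fun i j hij s hs => ?_
  set P : Set Ω := {ω | 0 < V i ω}
  have hP : MeasurableSet[𝒻 i] P := measurableSet_lt measurable_const (hVmeas i)
  have hincr : ∀ ω, V i ω + P.indicator (m i - m j) ω ≤ V j ω := fun ω => by
    by_cases h : ω ∈ P
    · have hVi : V i ω = c - m i ω + A i ω :=
        max_eq_left ((lt_max_iff.1 h).resolve_right (lt_irrefl _)).le
      rw [indicator_of_mem h, hVi, Pi.sub_apply]
      exact le_max_of_le_left (by linarith [hA_mono ω hij])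
    · rw [indicator_of_notMem h, add_zero]
      exact (not_lt.1 h).trans (le_max_right _ _)
  have h_int : Integrable (m i - m j) μ := (hm.integrable i).sub (hm.integrable j)
  have hzero : ∫ ω in s, P.indicator (m i - m j) ω ∂μ = 0 := by
    rw [setIntegral_indicator (𝒻.le i _ hP)]
    simp only [Pi.sub_apply]
    rw [integral_sub (hm.integrable i).integrableOn (hm.integrable j).integrableOn,
      hm.setIntegral_eq hij (hs.inter hP), sub_self]
  calc ∫ ω in s, V i ω ∂μ
      = ∫ ω in s, (V i ω + P.indicator (m i - m j) ω) ∂μ := by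
        rw [integral_add (hVint i).integrableOn
          (h_int.indicator (𝒻.le i _ hP)).integrableOn, hzero, add_zero]
    _ ≤ ∫ ω in s, V j ω ∂μ := setIntegral_mono
        ((hVint i).integrableOn.add (h_int.indicator (𝒻.le i _ hP)).integrableOn)
        (hVint j).integrableOn hincr

end Grid

section Cell

variable {h u v t : ℝ} {i : ℕ}

/-- The index `i` of the cell `(i * h, (i + 1) * h]` of the grid of step `h` containing `u > 0`. -/
noncomputable def cellIndex (h u : ℝ) : ℕ := ⌈u / h⌉₊ - 1

lemma cellIndex_add_one (hh : 0 < h) (hu : 0 < u) : cellIndex h u + 1 = ⌈u / h⌉₊ :=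
  Nat.sub_add_cancel (Nat.ceil_pos.2 (div_pos hu hh))

lemma le_cellIndex_add_one_mul (hh : 0 < h) (hu : 0 < u) : u ≤ (cellIndex h u + 1 : ℕ) * h := by
  rw [cellIndex_add_one hh hu, ← div_le_iff₀ hh]
  exact Nat.le_ceil _

lemma cellIndex_mul_lt (hh : 0 < h) (hu : 0 < u) : cellIndex h u * h < u := by
  rw [← lt_div_iff₀ hh]
  exact Nat.lt_ceil.1 (by rw [← cellIndex_add_one hh hu]; exact Nat.lt_succ_self _)

lemma cellIndex_mono (hh : 0 < h) : Monotone (cellIndex h) := fun _ _ huv =>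
  Nat.sub_le_sub_right (Nat.ceil_le_ceil (div_le_div_of_nonneg_right huv hh.le)) 1

lemma cellIndex_eq_of_mem_Ioc (hh : 0 < h) (hu : u ∈ Ioc (i * h) ((i + 1 : ℕ) * h)) :
    cellIndex h u = i := by
  have h_ceil : ⌈u / h⌉₊ = i + 1 :=
    (Nat.ceil_eq_iff i.succ_ne_zero).2
      ⟨by simpa using (lt_div_iff₀ hh).2 hu.1, (div_le_iff₀ hh).2 hu.2⟩
  rw [cellIndex, h_ceil, Nat.add_sub_cancel]

lemma cellIndex_lt_of_le_mul (hh : 0 < h) (hu : 0 < u) (hui : u ≤ i * h) : cellIndex h u < i := by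
  have h_ceil : ⌈u / h⌉₊ ≤ i := Nat.ceil_le.2 ((div_le_iff₀ hh).2 hui)
  rw [← cellIndex_add_one hh hu] at h_ceil
  exact h_ceil

lemma two_pow_mul_div_two_pow (t : ℝ) (k : ℕ) : ((2 ^ k : ℕ) : ℝ) * (t / 2 ^ k) = t := by
  push_cast
  exact mul_div_cancel₀ t (by positivity)

lemma two_pow_add_one_mul_div_two_pow_le (ht : 0 ≤ t) (k : ℕ) :
    ((2 ^ k + 1 : ℕ) : ℝ) * (t / 2 ^ k) ≤ 2 * t := by
  rw [Nat.cast_succ, add_one_mul, two_pow_mul_div_two_pow, two_mul]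
  exact add_le_add_right (div_le_self ht (one_le_pow₀ one_le_two)) t

lemma mul_div_two_pow_mem_Icc {k : ℕ} (ht : 0 ≤ t) (hi : i ≤ 2 ^ k) :
    i * (t / 2 ^ k) ∈ Icc 0 t :=
  ⟨by positivity, calc
    i * (t / 2 ^ k) ≤ (2 ^ k : ℕ) * (t / 2 ^ k) := by gcongr
    _ = t := two_pow_mul_div_two_pow t k⟩

lemma tendsto_div_two_pow (t : ℝ) : Tendsto (fun k : ℕ => t / 2 ^ k) atTop (nhds 0) :=
  tendsto_const_nhds.div_atTop (tendsto_pow_atTop_atTop_of_one_lt one_lt_two)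

variable {h : ℕ → ℝ} (hh : ∀ k, 0 < h k) (h_lim : Tendsto h atTop (nhds 0)) (hu : 0 < u)
include hh h_lim hu

lemma tendsto_cellIndex_mul :
    Tendsto (fun k => cellIndex (h k) u * h k) atTop (nhdsWithin u (Iio u)) := by
  refine tendsto_nhdsWithin_iff.2
    ⟨?_, Eventually.of_forall fun k => cellIndex_mul_lt (hh k) hu⟩
  refine tendsto_of_tendsto_of_tendsto_of_le_of_le (by simpa using h_lim.const_sub u)
    tendsto_const_nhds (fun k => ?_) (fun k => (cellIndex_mul_lt (hh k) hu).le)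
  have := le_cellIndex_add_one_mul (hh k) hu
  push_cast at this
  linarith

lemma tendsto_cellIndex_add_one_mul :
    Tendsto (fun k => (cellIndex (h k) u + 1 : ℕ) * h k) atTop (nhdsWithin u (Ici u)) := by
  refine tendsto_nhdsWithin_iff.2
    ⟨?_, Eventually.of_forall fun k => le_cellIndex_add_one_mul (hh k) hu⟩
  refine tendsto_of_tendsto_of_tendsto_of_le_of_le tendsto_const_nhds
    (by simpa using h_lim.const_add u) (fun k => le_cellIndex_add_one_mul (hh k) hu) (fun k => ?_)
  have := cellIndex_mul_lt (hh k) hu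
  push_cast
  linarith

lemma eventually_cellIndex_lt (huv : u < v) :
    ∀ᶠ k in atTop, cellIndex (h k) u < cellIndex (h k) v := by
  have h_left := (tendsto_nhdsWithin_iff.1 (tendsto_cellIndex_mul hh h_lim (hu.trans huv))).1
  filter_upwards [h_left.eventually (lt_mem_nhds huv)] with k hk
  exact_mod_cast lt_of_mul_lt_mul_right ((cellIndex_mul_lt (hh k) hu).trans hk) (hh k).le

end Cell

section Cadlag

variable {f : ℝ → ℝ} {t : ℝ}

/-- Right continuity everywhere, together with left limits on `(0, t]`. -/
def IsCadlagOn (f : ℝ → ℝ) (t : ℝ) : Prop :=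
  (∀ s, ContinuousWithinAt f (Ici s) s) ∧
    ∀ s ∈ Ioc 0 t, ∃ l, Tendsto f (nhdsWithin s (Iio s)) (nhds l)

lemma exists_dyadic_lt_of_lt (ht : 0 < t) (hf : ∀ s, ContinuousWithinAt f (Ici s) s) {c s : ℝ}
    (hs : s ∈ Icc 0 t) (hc : c < f s) : ∃ k j : ℕ, j ≤ 2 ^ k ∧ c < f (j * (t / 2 ^ k)) := by
  obtain ⟨hs0, hst⟩ := hs
  rcases hs0.eq_or_lt with rfl | hs0
  · exact ⟨0, 0, by simp, by simpa using hc⟩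
  obtain ⟨k, hk⟩ := (((hf s).tendsto.comp (tendsto_cellIndex_add_one_mul
    (fun k : ℕ => div_pos ht (pow_pos two_pos k)) (tendsto_div_two_pow t) hs0)).eventually
    (lt_mem_nhds hc)).exists
  exact ⟨k, _, Nat.succ_le_of_lt (cellIndex_lt_of_le_mul (by positivity) hs0
    (hst.trans_eq (two_pow_mul_div_two_pow t k).symm)), hk⟩

lemma exists_osc_le_right {s ε : ℝ} (hf : ContinuousWithinAt f (Ici s) s) (hε : 0 < ε) :
    ∃ δ > 0, ∀ u ∈ Ico s (s + δ), ∀ v ∈ Ico s (s + δ), |f v - f u| ≤ ε := by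
  obtain ⟨δ, hδ, h_near⟩ := Metric.continuousWithinAt_iff.1 hf (ε / 2) (half_pos hε)
  have h_dist : ∀ u ∈ Ico s (s + δ), dist (f u) (f s) < ε / 2 := fun u hu =>
    h_near hu.1 (by rw [Real.dist_eq, abs_of_nonneg (sub_nonneg.2 hu.1)]; linarith [hu.2])
  exact ⟨δ, hδ, fun u hu v hv =>
    by linarith [dist_triangle_right (f v) (f u) (f s), h_dist u hu, h_dist v hv,
      Real.dist_eq (f v) (f u)]⟩

lemma exists_osc_le_left {s ε l : ℝ} (hf : Tendsto f (nhdsWithin s (Iio s)) (nhds l))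
    (hε : 0 < ε) : ∃ δ > 0, ∀ u ∈ Ioo (s - δ) s, ∀ v ∈ Ioo (s - δ) s, |f v - f u| ≤ ε := by
  obtain ⟨δ, hδ, h_near⟩ := Metric.tendsto_nhdsWithin_nhds.1 hf (ε / 2) (half_pos hε)
  have h_dist : ∀ u ∈ Ioo (s - δ) s, dist (f u) l < ε / 2 := fun u hu =>
    h_near hu.2 (by rw [Real.dist_eq, abs_of_neg (sub_neg.2 hu.2)]; linarith [hu.1])
  exact ⟨δ, hδ, fun u hu v hv =>
    by linarith [dist_triangle_right (f v) (f u) l, h_dist u hu, h_dist v hv,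
      Real.dist_eq (f v) (f u)]⟩

lemma IsCadlagOn.exists_osc_le (hf : IsCadlagOn f t) {ε : ℝ} (hε : 0 < ε) :
    ∃ S : Finset ℝ, ∀ u v, 0 ≤ u → u ≤ v → v ≤ t → (∀ s ∈ S, s ∉ Ioc u v) →
      |f v - f u| ≤ ε := by
  have h_local : ∀ s ∈ Icc 0 t, ∃ δ > 0, ∀ u v, 0 ≤ u → u ≤ v → s - δ < u → v < s + δ →
      s ∉ Ioc u v → |f v - f u| ≤ ε := by
    intro s hs
    obtain ⟨δ₁, hδ₁, h_right⟩ := exists_osc_le_right (hf.1 s) hε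
    obtain ⟨δ₂, hδ₂, h_left⟩ : ∃ δ > 0, ∀ u v, 0 ≤ u → u ∈ Ioo (s - δ) s → v ∈ Ioo (s - δ) s →
        |f v - f u| ≤ ε := by
      rcases hs.1.eq_or_lt with rfl | hs0
      · exact ⟨1, one_pos, fun u _ hu0 hu => absurd hu.2 hu0.not_gt⟩
      · obtain ⟨l, hl⟩ := hf.2 s ⟨hs0, hs.2⟩
        obtain ⟨δ, hδ, h_osc⟩ := exists_osc_le_left hl hε
        exact ⟨δ, hδ, fun u v _ hu hv => h_osc u hu v hv⟩
    refine ⟨min δ₁ δ₂, lt_min hδ₁ hδ₂, fun u v hu0 huv hu hv hs_not => ?_⟩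
    have h_min₁ := min_le_left δ₁ δ₂
    have h_min₂ := min_le_right δ₁ δ₂
    rcases lt_or_ge u s with hus | hus
    · have hvs : v < s := lt_of_not_ge fun hsv => hs_not ⟨hus, hsv⟩
      exact h_left u v hu0 ⟨by linarith, hus⟩ ⟨by linarith, hvs⟩
    · exact h_right u ⟨hus, by linarith⟩ v ⟨hus.trans huv, by linarith⟩
  choose! δ hδ h_osc using h_local
  obtain ⟨T, hT, h_cover⟩ := isCompact_Icc.elim_nhds_subcover (fun s => Ioo (s - δ s) (s + δ s))
    fun s (hs : s ∈ Icc 0 t) => Ioo_mem_nhds (by linarith [hδ s hs]) (by linarith [hδ s hs])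
  classical
  refine ⟨T ∪ T.image fun s => s + δ s, fun u v hu huv hvt hS => ?_⟩
  obtain ⟨s, hsT, hus⟩ := mem_iUnion₂.1 (h_cover ⟨hu, huv.trans hvt⟩)
  have hvs : v < s + δ s := lt_of_not_ge fun hv => hS (s + δ s)
    (Finset.mem_union_right _ (Finset.mem_image_of_mem _ hsT)) ⟨hus.2, hv⟩
  exact h_osc s (hT s hsT) u v hu huv hus.1 hvs (hS s (Finset.mem_union_left _ hsT))

lemma card_filter_le_eq_iff {S : Finset ℝ} {u v : ℝ} (huv : u ≤ v) :
    (S.filter (· ≤ u)).card = (S.filter (· ≤ v)).card ↔ ∀ s ∈ S, s ∉ Ioc u v := by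
  have h_sub : S.filter (· ≤ u) ⊆ S.filter (· ≤ v) :=
    Finset.monotone_filter_right _ fun s _ hs => le_trans hs huv
  refine ⟨fun h_eq s hs hsuv => ?_, fun h_not => congrArg _ (h_sub.antisymm fun s hs => ?_)⟩
  · have h_mem : s ∈ S.filter (· ≤ u) := by
      rw [Finset.eq_of_subset_of_card_le h_sub h_eq.ge]
      exact Finset.mem_filter.2 ⟨hs, hsuv.2⟩
    exact hsuv.1.not_ge (Finset.mem_filter.1 h_mem).2
  · rw [Finset.mem_filter] at hs ⊢
    exact ⟨hs.1, le_of_not_gt fun hus => h_not s hs.1 ⟨hus, hs.2⟩⟩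

lemma card_filter_le_mono (S : Finset ℝ) : Monotone fun u : ℝ => (S.filter (· ≤ u)).card :=
  fun _ _ huv => Finset.card_le_card (Finset.monotone_filter_right _ fun _ _ hs => le_trans hs huv)

end Cadlag

section PathRegularity

variable {m0 : MeasurableSpace Ω} {μ : Measure Ω} [IsFiniteMeasure μ] {𝒻 : Filtration ℝ m0}
  {V : ℝ → Ω → ℝ} {t : ℝ}

lemma exists_superset_mul_measureReal_le (hV : Submartingale V 𝒻 μ) (hV0 : 0 ≤ V)
    (hV_rc : ∀ ω s, ContinuousWithinAt (fun s => V s ω) (Ici s) s) (ht : 0 < t) {c : ℝ}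
    (hc : 0 ≤ c) :
    ∃ F : Set Ω, {ω | ∃ s ∈ Icc 0 t, c < V s ω} ⊆ F ∧
      c * μ.real F ≤ ∫ ω in F, V t ω ∂μ := by
  have hh : ∀ k : ℕ, 0 ≤ t / 2 ^ k := fun k => by positivity
  set F : ℕ → Set Ω := fun k => {ω | c ≤ (Finset.range (2 ^ k + 1)).sup'
    Finset.nonempty_range_add_one fun j : ℕ => V (j * (t / 2 ^ k)) ω} with hF
  have mem_F : ∀ k ω, ω ∈ F k ↔ ∃ j : ℕ, j ≤ 2 ^ k ∧ c ≤ V (j * (t / 2 ^ k)) ω := by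
    simp [hF, Finset.le_sup'_iff]
  have hF_meas : ∀ k, MeasurableSet (F k) := fun k => measurableSet_le measurable_const
    (Finset.measurable_range_sup'' fun j _ => ((hV.stronglyAdapted _).mono (𝒻.le _)).measurable)
  have hF_mono : Monotone F := monotone_nat_of_le_succ fun k ω hω => by
    obtain ⟨j, hj, hcj⟩ := (mem_F k ω).1 hω
    refine (mem_F _ _).2 ⟨2 * j, by rw [pow_succ]; omega, ?_⟩
    convert hcj using 2
    rw [pow_succ]
    push_cast
    field_simp
  have h_disc : ∀ k, c * μ.real (F k) ≤ ∫ ω in F k, V t ω ∂μ := fun k => by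
    lift c to NNReal using hc
    have h_max := maximal_ineq (submartingale_grid hV (hh k)) (fun j => hV0 _) (ε := c) (2 ^ k)
    rw [two_pow_mul_div_two_pow] at h_max
    have h_real := ENNReal.toReal_le_of_le_ofReal (integral_nonneg fun ω => hV0 t ω) h_max
    rwa [ENNReal.toReal_mul, ENNReal.coe_toReal] at h_real
  refine ⟨⋃ k, F k, ?_, ?_⟩
  · rintro ω ⟨s, hs, hcs⟩
    obtain ⟨k, j, hj, hcj⟩ := exists_dyadic_lt_of_lt ht (hV_rc ω) hs hcs
    exact mem_iUnion.2 ⟨k, (mem_F k ω).2 ⟨j, hj, hcj.le⟩⟩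
  · refine le_of_tendsto_of_tendsto' (Tendsto.const_mul c ?_)
      (tendsto_setIntegral_of_monotone hF_meas hF_mono (hV.integrable t).integrableOn) h_disc
    exact (ENNReal.tendsto_toReal (measure_ne_top _ _)).comp (tendsto_measure_iUnion_atTop hF_mono)

lemma ae_exists_forall_le (hV : Submartingale V 𝒻 μ) (hV0 : 0 ≤ V)
    (hV_rc : ∀ ω s, ContinuousWithinAt (fun s => V s ω) (Ici s) s) (ht : 0 < t) :
    ∀ᵐ ω ∂μ, ∃ c, ∀ s ∈ Icc 0 t, V s ω ≤ c := by
  choose F hF_cover hF using fun n : ℕ =>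
    exists_superset_mul_measureReal_le hV hV0 hV_rc ht (c := n) n.cast_nonneg
  have h_real : ∀ n : ℕ, n * μ.real (⋂ n, F n) ≤ ∫ ω, V t ω ∂μ := fun n =>
    calc n * μ.real (⋂ n, F n) ≤ n * μ.real (F n) :=
        mul_le_mul_of_nonneg_left (measureReal_mono (iInter_subset F n)) n.cast_nonneg
      _ ≤ ∫ ω in F n, V t ω ∂μ := hF n
      _ ≤ ∫ ω, V t ω ∂μ := setIntegral_le_integral (hV.integrable t) (.of_forall (hV0 t))
  have h_null : μ (⋂ n, F n) = 0 := by
    rw [← measureReal_eq_zero_iff]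
    by_contra h_ne
    obtain ⟨n, hn⟩ := Archimedean.arch (∫ ω, V t ω ∂μ + 1)
      (measureReal_nonneg.lt_of_ne' h_ne)
    rw [nsmul_eq_mul] at hn
    linarith [h_real n]
  refine measure_mono_null (fun ω hω => mem_iInter.2 fun n => hF_cover n ?_) h_null
  simp only [mem_compl_iff, mem_ofPred_eq, not_exists, not_forall, not_le] at hω
  obtain ⟨s, hs, hns⟩ := hω n
  exact ⟨s, hs, hns⟩

lemma ae_exists_lt_forall_le {b : ℝ} (hV : Submartingale V 𝒻 μ) (hV0 : 0 ≤ V)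
    (hV_rc : ∀ ω s, ContinuousWithinAt (fun s => V s ω) (Ici s) s) (ht : 0 < t)
    (hVb : ∀ ω, V t ω < b) : ∀ᵐ ω ∂μ, ∃ c < b, ∀ s ∈ Icc 0 t, V s ω ≤ c := by
  set c : ℕ → ℝ := fun n => max (b - 1 / (n + 1)) 0
  choose F hF_cover hF using fun n : ℕ =>
    exists_superset_mul_measureReal_le hV hV0 hV_rc ht (le_max_right (b - 1 / (n + 1)) 0)
  have h_int : Integrable (fun ω => b - V t ω) μ := (integrable_const b).sub (hV.integrable t)
  have h_nonneg : ∀ ω, 0 ≤ b - V t ω := fun ω => sub_nonneg.2 (hVb ω).le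
  have h_le : ∀ n : ℕ, ∫ ω in ⋂ n, F n, b - V t ω ∂μ ≤ 1 / (n + 1) * μ.real univ := fun n =>
    calc ∫ ω in ⋂ n, F n, b - V t ω ∂μ ≤ ∫ ω in F n, b - V t ω ∂μ :=
          setIntegral_mono_set h_int.integrableOn (.of_forall h_nonneg)
            (iInter_subset F n).eventuallyLE
      _ = b * μ.real (F n) - ∫ ω in F n, V t ω ∂μ := by
          rw [integral_sub (integrable_const b) (hV.integrable t).integrableOn, integral_const,
            measureReal_restrict_apply_univ, smul_eq_mul, mul_comm]
      _ ≤ (b - (b - 1 / (n + 1))) * μ.real (F n) := by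
          have := mul_le_mul_of_nonneg_right (le_max_left (b - 1 / ((n : ℝ) + 1)) 0)
            (measureReal_nonneg (μ := μ) (s := F n))
          linarith [hF n]
      _ ≤ 1 / (n + 1) * μ.real univ := by
          rw [sub_sub_cancel]
          gcongr
          exacts [measure_ne_top _ _, subset_univ _]
  have h_zero : ∫ ω in ⋂ n, F n, b - V t ω ∂μ ≤ 0 := ge_of_tendsto'
    (by simpa using tendsto_one_div_add_atTop_nhds_zero_nat.mul_const (μ.real univ)) h_le
  have h_null : μ (⋂ n, F n) = 0 := by
    have h_supp : support (fun ω => b - V t ω) = univ :=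
      support_eq_univ fun ω => (sub_pos.2 (hVb ω)).ne'
    simpa [h_supp] using mt (setIntegral_pos_iff_support_of_nonneg_ae (.of_forall h_nonneg)
      h_int.integrableOn).2 h_zero.not_gt
  refine measure_mono_null (fun ω hω => mem_iInter.2 fun n => hF_cover n ?_) h_null
  simp only [mem_compl_iff, mem_ofPred_eq, not_exists, not_and, not_forall, not_le] at hω
  have h_lt : max (b - 1 / ((n : ℝ) + 1)) 0 < b :=
    max_lt (sub_lt_self b Nat.one_div_pos_of_nat) ((hV0 t ω).trans_lt (hVb ω))
  obtain ⟨s, hs, hns⟩ := hω _ h_lt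
  exact ⟨s, hs, hns⟩

lemma eventually_le_upcrossingsBefore {ω : Ω} {u a b : ℝ} {h : ℕ → ℝ} (hab : a < b)
    (hu : 0 < u) (hh : ∀ k, 0 < h k) (h_lim : Tendsto h atTop (nhds 0))
    (hV_rc : ∀ s, ContinuousWithinAt (fun s => V s ω) (Ici s) s)
    (ha : ∃ᶠ s in nhdsWithin u (Iio u), V s ω < a)
    (hb : ∃ᶠ s in nhdsWithin u (Iio u), b < V s ω) (n : ℕ) :
    ∃ w ∈ Ioo 0 u, ∀ᶠ k in atTop,
      n ≤ upcrossingsBefore a b (fun j : ℕ => V (j * h k)) (cellIndex (h k) w + 2) ω := by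
  have h_value : ∀ w ∈ Ioo 0 u, Tendsto (fun k => V ((cellIndex (h k) w + 1 : ℕ) * h k) ω) atTop
      (nhds (V w ω)) := fun w hw =>
    (hV_rc w).tendsto.comp (tendsto_cellIndex_add_one_mul hh h_lim hw.1)
  have h_next : ∀ v ∈ Ioo 0 u, ∀ {p : ℝ → Prop}, (∃ᶠ s in nhdsWithin u (Iio u), p s) →
      ∃ w ∈ Ioo v u, p w := fun v hv p hp => by
    obtain ⟨w, hpw, hw⟩ := (hp.and_eventually (Ioo_mem_nhdsLT hv.2)).exists
    exact ⟨w, hw, hpw⟩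
  induction n with
  | zero => exact ⟨u / 2, ⟨half_pos hu, half_lt_self hu⟩, by simp⟩
  | succ n ih =>
    obtain ⟨w, hw, h_count⟩ := ih
    obtain ⟨x, hx, hxa⟩ := h_next w hw ha
    have hx' : x ∈ Ioo 0 u := ⟨hw.1.trans hx.1, hx.2⟩
    obtain ⟨y, hy, hyb⟩ := h_next x hx' hb
    have hy' : y ∈ Ioo 0 u := ⟨hx'.1.trans hy.1, hy.2⟩
    refine ⟨y, hy', ?_⟩
    filter_upwards [h_count, eventually_cellIndex_lt hh h_lim hw.1 hx.1,
      eventually_cellIndex_lt hh h_lim hx'.1 hy.1, (h_value x hx').eventually (gt_mem_nhds hxa),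
      (h_value y hy').eventually (lt_mem_nhds hyb)] with k hk hwx hxy hxa hyb
    exact hk.trans_lt (upcrossingsBefore_lt_of_exists_upcrossing hab (by omega) hxa (by omega) hyb)

lemma ae_not_frequently_upcrossing {a b : ℝ} (hV : Submartingale V 𝒻 μ)
    (hV_rc : ∀ ω s, ContinuousWithinAt (fun s => V s ω) (Ici s) s) (ht : 0 < t) (hab : a < b) :
    ∀ᵐ ω ∂μ, ∀ u ∈ Ioc 0 t, ¬((∃ᶠ s in nhdsWithin u (Iio u), V s ω < a) ∧
      ∃ᶠ s in nhdsWithin u (Iio u), b < V s ω) := by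
  have hh : ∀ k : ℕ, 0 < t / 2 ^ k := fun k => by positivity
  set U : ℕ → Ω → ℕ := fun k =>
    upcrossingsBefore a b (fun j : ℕ => V (j * (t / 2 ^ k))) (2 ^ k)
  have hV_grid := fun k => submartingale_grid hV (hh k).le
  have hU_meas : ∀ k, Measurable fun ω => (U k ω : ℝ) := fun k =>
    measurable_from_nat.comp ((hV_grid k).stronglyAdapted.measurable_upcrossingsBefore hab)
  set R : ℝ := (∫ ω, (V t ω - a)⁺ ∂μ) / (b - a)
  have hU_int : ∀ k, ∫ ω, (U k ω : ℝ) ∂μ ≤ R := fun k => by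
    have := (hV_grid k).mul_integral_upcrossingsBefore_le_integral_pos_part a b (2 ^ k)
    simp only [two_pow_mul_div_two_pow] at this
    rwa [le_div_iff₀' (sub_pos.2 hab)]
  have hU_norm : ∀ k, eLpNorm (fun ω => (U k ω : ℝ)) 1 μ ≤ R.toNNReal := fun k => by
    rw [eLpNorm_one_eq_lintegral_enorm, ← ofReal_integral_norm_eq_lintegral_enorm
      ((hV_grid k).stronglyAdapted.integrable_upcrossingsBefore hab)]
    exact ENNReal.ofReal_le_ofReal (by simpa using hU_int k)
  filter_upwards [ae_bdd_liminf_atTop_of_eLpNorm_bdd one_ne_zero hU_meas hU_norm]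
    with ω hω u hu ⟨ha, hb⟩
  refine hω.ne (Tendsto.liminf_eq (ENNReal.tendsto_nhds_top fun n => ?_))
  obtain ⟨w, hw, h_count⟩ := eventually_le_upcrossingsBefore hab hu.1 hh (tendsto_div_two_pow t)
    (hV_rc ω) ha hb (n + 1)
  filter_upwards [h_count, eventually_cellIndex_lt hh (tendsto_div_two_pow t) hw.1 hw.2]
    with k hk h_lt
  have h_le : cellIndex (t / 2 ^ k) w + 2 ≤ 2 ^ k := by
    have := cellIndex_lt_of_le_mul (hh k) hu.1 (hu.2.trans_eq (two_pow_mul_div_two_pow t k).symm)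
    omega
  rw [Real.enorm_natCast, Nat.cast_lt]
  exact Nat.lt_of_succ_le (hk.trans (upcrossingsBefore_mono hab h_le ω))

lemma ae_isCadlagOn (hV : Submartingale V 𝒻 μ)
    (hV_rc : ∀ ω s, ContinuousWithinAt (fun s => V s ω) (Ici s) s) (ht : 0 < t)
    (hV_bdd : ∀ᵐ ω ∂μ, ∃ c, ∀ s ∈ Icc 0 t, |V s ω| ≤ c) :
    ∀ᵐ ω ∂μ, IsCadlagOn (fun s => V s ω) t := by
  have h_up : ∀ᵐ ω ∂μ, ∀ a b : ℚ, a < b → ∀ u ∈ Ioc 0 t,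
      ¬((∃ᶠ s in nhdsWithin u (Iio u), V s ω < a) ∧ ∃ᶠ s in nhdsWithin u (Iio u), b < V s ω) := by
    simp only [ae_all_iff]
    exact fun a b hab => ae_not_frequently_upcrossing hV hV_rc ht (Rat.cast_lt.2 hab)
  filter_upwards [h_up, hV_bdd] with ω hω ⟨c, hc⟩
  refine ⟨hV_rc ω, fun u hu => ?_⟩
  have h_near : ∀ᶠ s in nhdsWithin u (Iio u), |V s ω| ≤ c :=
    mem_of_superset (Ioo_mem_nhdsLT hu.1) fun s hs => hc s ⟨hs.1.le, hs.2.le.trans hu.2⟩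
  refine tendsto_of_no_upcrossings (Rat.denseRange_cast (𝕜 := ℝ)) ?_
    (isBoundedUnder_of_eventually_le (a := c) (h_near.mono fun s hs => (abs_le.1 hs).2))
    (isBoundedUnder_of_eventually_ge (a := -c) (h_near.mono fun s hs => (abs_le.1 hs).1))
  rintro _ ⟨a, rfl⟩ _ ⟨b, rfl⟩ hab
  exact hω a b (Rat.cast_lt.1 hab) u hu

lemma ae_exists_forall_abs_le {m : ℝ → Ω → ℝ} (hm : Martingale m 𝒻 μ)
    (hm_rc : ∀ ω s, ContinuousWithinAt (fun s => m s ω) (Ici s) s) (ht : 0 < t) :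
    ∀ᵐ ω ∂μ, ∃ c, ∀ s ∈ Icc 0 t, |m s ω| ≤ c :=
  ae_exists_forall_le (hm.submartingale.sup hm.neg.submartingale) (fun _ _ => abs_nonneg _)
    (fun ω s => (hm_rc ω s).abs) ht

lemma ae_exists_pos_forall_le_sub {m A : ℝ → Ω → ℝ} (hm : Martingale m 𝒻 μ) (hA : Adapted 𝒻 A)
    (hA_mono : ∀ ω, Monotone fun s => A s ω) (hAm : ∀ s ω, A s ω < m s ω)
    (hm_rc : ∀ ω s, ContinuousWithinAt (fun s => m s ω) (Ici s) s)
    (hA_rc : ∀ ω s, ContinuousWithinAt (fun s => A s ω) (Ici s) s) (ht : 0 < t) :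
    ∀ᵐ ω ∂μ, ∃ c > 0, ∀ s ∈ Icc 0 t, c ≤ m s ω - A s ω := by
  have h_sub := submartingale_max_sub_add hm hA hA_mono (fun s ω => (hAm s ω).le) 1
  have h_rc : ∀ ω s, ContinuousWithinAt (fun s => max (1 - m s ω + A s ω) 0) (Ici s) s :=
    fun ω s => ((continuousWithinAt_const.sub (hm_rc ω s)).add (hA_rc ω s)).max
      continuousWithinAt_const
  filter_upwards [ae_exists_lt_forall_le h_sub (fun _ _ => le_max_right _ _) h_rc ht
    fun ω => max_lt (by linarith [hAm t ω]) one_pos] with ω ⟨c, hc, h_le⟩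
  exact ⟨1 - c, sub_pos.2 hc, fun s hs => by
    linarith [le_max_left (1 - m s ω + A s ω) 0, h_le s hs]⟩

end PathRegularity

section Block

/-- The sum of `(X_j - X_i) * (X_{j+1} - X_j)` over the first `J` blocks of length `R`, where
`i` is the first index of the block of `j`; twice this is the difference between the sums of
squared increments along the blocks and along single steps. -/
def blockSum (R : ℕ) (X : ℕ → ℝ) (J : ℕ) : ℝ :=
  ∑ c ∈ Finset.range J, ∑ a ∈ Finset.range R,
    (X (c * R + a) - X (c * R)) * (X (c * R + a + 1) - X (c * R + a))

/-- The part of `blockSum R X J` due to the resets of `X`: the process `X` is replaced, inside each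
block, by its `resetValue` restarted at the beginning of the block. -/
noncomputable def blockResetSum (ε : ℝ) (R : ℕ) (X : ℕ → ℝ) (J : ℕ) : ℝ :=
  ∑ c ∈ Finset.range J, ∑ a ∈ Finset.range R,
    (resetValue ε (fun i => X (c * R + i)) a - X (c * R)) * (X (c * R + a + 1) - X (c * R + a))

lemma measurable_runningMax_blockSum {Ω : Type*} [MeasurableSpace Ω] {X : ℕ → Ω → ℝ} (R N : ℕ)
    (hX : ∀ j, Measurable (X j)) :
    Measurable fun ω => runningMax (blockSum R fun j => X j ω) N :=
  measurable_runningMax N fun _ _ => Finset.measurable_fun_sum _ fun _ _ =>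
    Finset.measurable_fun_sum _ fun _ _ => ((hX _).sub (hX _)).mul ((hX _).sub (hX _))

lemma sum_range_mul_eq_sum_blocks {M : Type*} [AddCommMonoid M] (F : ℕ → M) (J R : ℕ) :
    ∑ j ∈ Finset.range (J * R), F j
      = ∑ c ∈ Finset.range J, ∑ a ∈ Finset.range R, F (c * R + a) := by
  induction J with
  | zero => simp
  | succ J ih => rw [Nat.succ_mul, Finset.sum_range_add, ih, Finset.sum_range_succ]

lemma sum_sq_blocks_eq (R : ℕ) (X : ℕ → ℝ) (J : ℕ) :
    ∑ c ∈ Finset.range J, (X ((c + 1) * R) - X (c * R)) ^ 2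
      = ∑ j ∈ Finset.range (J * R), (X (j + 1) - X j) ^ 2 + 2 * blockSum R X J := by
  have h_block : ∀ (Y : ℕ → ℝ) (R : ℕ), (Y R - Y 0) ^ 2 = ∑ a ∈ Finset.range R,
      ((Y (a + 1) - Y a) ^ 2 + 2 * ((Y a - Y 0) * (Y (a + 1) - Y a))) := by
    intro Y R
    induction R with
    | zero => simp
    | succ R ih => rw [Finset.sum_range_succ, ← ih]; ring
  rw [sum_range_mul_eq_sum_blocks, blockSum, Finset.mul_sum, ← Finset.sum_add_distrib]
  refine Finset.sum_congr rfl fun c _ => ?_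
  rw [Finset.mul_sum, ← Finset.sum_add_distrib, add_mul, one_mul]
  exact h_block (fun a => X (c * R + a)) R

lemma blockSum_eq_add_blockResetSum (ε : ℝ) {R : ℕ} (X : ℕ → ℝ) (J : ℕ) :
    blockSum R X J = blockResetSum ε R X J + ∑ j ∈ Finset.range (J * R),
      (X j - resetValue ε (fun i => X (j / R * R + i)) (j % R)) * (X (j + 1) - X j) := by
  rw [sum_range_mul_eq_sum_blocks, blockSum, blockResetSum, ← Finset.sum_add_distrib]
  refine Finset.sum_congr rfl fun c _ => ?_
  rw [← Finset.sum_add_distrib]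
  refine Finset.sum_congr rfl fun a ha => ?_
  have ha' : a < R := Finset.mem_range.1 ha
  have h_div : (c * R + a) / R = c := by
    rw [mul_comm, Nat.mul_add_div (by omega), Nat.div_eq_of_lt ha', add_zero]
  have h_mod : (c * R + a) % R = a := by
    rw [mul_comm, Nat.mul_add_mod, Nat.mod_eq_of_lt ha']
  rw [h_div, h_mod]
  ring

end Block

section CadlagBlock

variable {f : ℝ → ℝ} {S : Finset ℝ} {t ε η b δ : ℝ}

lemma abs_sum_resetValue_sub_mul_le_card {p : ℕ → ℝ} {R : ℕ} (hη : 0 ≤ η)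
    (hb : ∀ u v, |f v - f u| ≤ b)
    (hS : ∀ u v, 0 ≤ u → u ≤ v → v ≤ t → (∀ s ∈ S, s ∉ Ioc u v) → |f v - f u| ≤ ε)
    (hδ : ∀ s ∈ S, ∀ u ∈ Ico s (s + δ), ∀ v ∈ Ico s (s + δ), |f v - f u| ≤ η)
    (hp : Monotone p) (hp0 : 0 ≤ p 0) (hpR : p R ≤ t) (hpδ : p R < p 0 + δ) :
    |∑ a ∈ Finset.range R, (resetValue ε (fun a => f (p a)) a - f (p 0)) *
      (f (p (a + 1)) - f (p a))|
      ≤ b * η * ((S.filter (· ≤ p R)).card - (S.filter (· ≤ p 0)).card) := by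
  have hb0 : 0 ≤ b := (abs_nonneg _).trans (hb 0 0)
  have h_nonneg : ∀ a, 0 ≤ p a := fun a => hp0.trans (hp a.zero_le)
  have h_count : (S.filter (· ≤ p 0)).card + resetCount ε (fun a => f (p a)) R
      ≤ (S.filter (· ≤ p R)).card :=
    add_resetCount_le (label := fun a => (S.filter (· ≤ p a)).card)
      (fun i j hij _ => card_filter_le_mono S (hp hij)) fun i j hij hjR h_eq =>
        hS _ _ (h_nonneg i) (hp hij) ((hp hjR).trans hpR) ((card_filter_le_eq_iff (hp hij)).1 h_eq)
  calc |∑ a ∈ Finset.range R, (resetValue ε (fun a => f (p a)) a - f (p 0)) *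
        (f (p (a + 1)) - f (p a))|
      ≤ b * η * resetCount ε (fun a => f (p a)) R := by
        refine abs_sum_resetValue_sub_mul_le (X := fun a => f (p a)) (Y := fun a => f (p a))
          fun a ha h_reset => ?_
        obtain ⟨i, hia, hi⟩ := exists_resetValue_eq ε (fun a => f (p a)) a
        rw [hi] at h_reset ⊢
        refine mul_le_mul (hb _ _) ?_ (abs_nonneg _) hb0
        have hi_le : p i ≤ p (a + 1) := hp (Nat.le_succ_of_le hia)
        have h_end : p (a + 1) ≤ p R := hp (Nat.succ_le_of_lt ha)
        obtain ⟨s, hs, hs_mem⟩ : ∃ s ∈ S, s ∈ Ioc (p i) (p (a + 1)) := by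
          by_contra! h_none
          exact h_reset.not_ge (hS _ _ (h_nonneg i) hi_le (h_end.trans hpR) h_none)
        have h_start : p 0 < s := (hp i.zero_le).trans_lt hs_mem.1
        exact hδ s hs _ ⟨hs_mem.2, by linarith⟩ _ ⟨hs_mem.2.trans h_end, by linarith⟩
    _ ≤ _ := by
        refine mul_le_mul_of_nonneg_left ?_ (mul_nonneg hb0 hη)
        rw [le_sub_iff_add_le']
        exact_mod_cast h_count

lemma abs_blockResetSum_le_card {h : ℝ} {R J : ℕ} (hη : 0 ≤ η) (hb : ∀ u v, |f v - f u| ≤ b)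
    (hS : ∀ u v, 0 ≤ u → u ≤ v → v ≤ t → (∀ s ∈ S, s ∉ Ioc u v) → |f v - f u| ≤ ε)
    (hδ : ∀ s ∈ S, ∀ u ∈ Ico s (s + δ), ∀ v ∈ Ico s (s + δ), |f v - f u| ≤ η)
    (hh : 0 ≤ h) (hRδ : R * h < δ) (hJ : (J * R : ℕ) * h ≤ t) :
    |blockResetSum ε R (fun j => f (j * h)) J| ≤ b * η * S.card := by
  have hb0 : 0 ≤ b := (abs_nonneg _).trans (hb 0 0)
  have h_block : ∀ c ∈ Finset.range J, |∑ a ∈ Finset.range R,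
      (resetValue ε (fun i => f ((c * R + i : ℕ) * h)) a - f ((c * R : ℕ) * h)) *
        (f ((c * R + a + 1 : ℕ) * h) - f ((c * R + a : ℕ) * h))|
      ≤ b * η * ((S.filter (· ≤ ((c + 1) * R : ℕ) * h)).card
        - (S.filter (· ≤ (c * R : ℕ) * h)).card) := by
    intro c hc
    have h_le : ((c + 1) * R : ℕ) * h ≤ t := le_trans (by
      gcongr
      exact Nat.succ_le_of_lt (Finset.mem_range.1 hc)) hJ
    rw [Nat.succ_mul] at h_le ⊢
    exact abs_sum_resetValue_sub_mul_le_card (p := fun a => (c * R + a : ℕ) * h) hη hb hS hδ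
      (fun a a' h_aa' => by dsimp only; gcongr) (by positivity) h_le (by push_cast; linarith)
  calc |blockResetSum ε R (fun j => f (j * h)) J|
      ≤ ∑ c ∈ Finset.range J, b * η * ((S.filter (· ≤ ((c + 1) * R : ℕ) * h)).card
        - (S.filter (· ≤ (c * R : ℕ) * h)).card) :=
        (Finset.abs_sum_le_sum_abs _ _).trans (Finset.sum_le_sum h_block)
    _ = b * η * ((S.filter (· ≤ (J * R : ℕ) * h)).card
        - (S.filter (· ≤ (0 * R : ℕ) * h)).card) := by
        rw [← Finset.mul_sum, Finset.sum_range_sub fun c : ℕ =>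
          ((S.filter (· ≤ (c * R : ℕ) * h)).card : ℝ)]
    _ ≤ b * η * S.card := by
        refine mul_le_mul_of_nonneg_left ((sub_le_self _ (Nat.cast_nonneg _)).trans ?_)
          (mul_nonneg hb0 hη)
        exact_mod_cast Finset.card_filter_le _ _

lemma IsCadlagOn.tendsto_runningMax_blockResetSum (hf : IsCadlagOn f t)
    (hb : ∀ u v, |f v - f u| ≤ b) (ht : 0 < t) (hε : 0 < ε) (r : ℕ → ℕ) :
    Tendsto (fun k => runningMax
      (blockResetSum ε (2 ^ r k) fun j => f (j * (t / 2 ^ (k + r k)))) (2 ^ k)) atTop (nhds 0) := by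
  have hb0 : 0 ≤ b := (abs_nonneg _).trans (hb 0 0)
  obtain ⟨S, hS⟩ := hf.exists_osc_le hε
  rw [Metric.tendsto_nhds]
  intro l hl
  obtain ⟨η, hη, h_small⟩ : ∃ η > 0, b * η * S.card < l :=
    ⟨l / (b * S.card + 1), by positivity, by
      rw [mul_right_comm, mul_div_assoc', div_lt_iff₀ (by positivity)]
      nlinarith⟩
  obtain ⟨δ, hδ, h_osc⟩ : ∃ δ > 0, ∀ s ∈ S, ∀ u ∈ Ico s (s + δ), ∀ v ∈ Ico s (s + δ),
      |f v - f u| ≤ η := by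
    have h_event : ∀ᶠ δ in nhdsWithin (0 : ℝ) (Ioi 0), ∀ s ∈ S, ∀ u ∈ Ico s (s + δ),
        ∀ v ∈ Ico s (s + δ), |f v - f u| ≤ η := by
      refine (eventually_all_finset S).2 fun s _ => ?_
      obtain ⟨δ, hδ, h_right⟩ := exists_osc_le_right (hf.1 s) hη
      filter_upwards [Ioo_mem_nhdsGT hδ] with δ' hδ' u hu v hv
      exact h_right u ⟨hu.1, hu.2.trans (by linarith [hδ'.2])⟩
        v ⟨hv.1, hv.2.trans (by linarith [hδ'.2])⟩
    obtain ⟨δ, h_osc, hδ⟩ := (h_event.and self_mem_nhdsWithin).exists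
    exact ⟨δ, hδ, h_osc⟩
  filter_upwards [(tendsto_div_two_pow t).eventually_lt_const hδ] with k hk
  rw [Real.dist_eq, sub_zero, abs_of_nonneg runningMax_nonneg]
  refine lt_of_le_of_lt (runningMax_le_iff.2 fun J hJ => ?_) h_small
  refine abs_blockResetSum_le_card hη.le hb hS h_osc (by positivity) ?_ ?_
  · rwa [pow_add, mul_comm (2 ^ k), ← div_div, div_right_comm, Nat.cast_pow, Nat.cast_ofNat,
      mul_div_cancel₀ _ (by positivity)]
  · exact (mul_div_two_pow_mem_Icc ht.le
      ((Nat.mul_le_mul_right _ hJ).trans_eq (pow_add 2 k (r k)).symm)).2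

end CadlagBlock

section Submartingale

variable {m0 : MeasurableSpace Ω} {μ : Measure Ω} [IsFiniteMeasure μ] {V : ℝ → Ω → ℝ} {b t : ℝ}

lemma exists_forall_measureReal_runningMax_sub_resetValue_le {𝒻 : Filtration ℝ m0}
    (hV : Submartingale V 𝒻 μ) (hV0 : ∀ s ω, 0 ≤ V s ω) (hVb : ∀ s ω, V s ω ≤ b)
    {l η : ℝ} (hl : 0 < l) (hη : 0 < η) :
    ∃ ε > 0, ∀ (h : ℝ) (R N : ℕ), 0 ≤ h → μ.real {ω | l < runningMax (fun J =>
      ∑ j ∈ Finset.range J, (V (j * h) ω - resetValue ε (fun i => V ((j / R * R + i : ℕ) * h) ω)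
        (j % R)) * (V ((j + 1 : ℕ) * h) ω - V (j * h) ω)) N} ≤ η := by
  have h_lim : Tendsto (fun ε => (2 * l * ε * b + ε ^ 2 * b ^ 2) * μ.real univ)
      (nhdsWithin 0 (Ioi 0)) (nhds 0) :=
    tendsto_nhdsWithin_of_tendsto_nhds (Continuous.tendsto' (by fun_prop) _ _ (by simp))
  obtain ⟨ε, h_small, hε⟩ := ((h_lim.eventually_lt_const
    (show 0 < l ^ 2 * η by positivity)).and self_mem_nhdsWithin).exists
  replace hε : 0 < ε := hε
  refine ⟨ε, hε, fun h R N hh => le_of_mul_le_mul_left (le_trans ?_ h_small.le)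
    (pow_pos hl 2)⟩
  have hV_grid := submartingale_grid hV hh
  have h_index : ∀ j : ℕ, j / R * R + j % R = j := fun j => by
    rw [mul_comm, Nat.div_add_mod]
  refine sq_mul_measureReal_lt_runningMax_le hV_grid (fun j => hV0 _) (fun j => hVb _)
    (fun j => ?_) (fun j ω => ?_) hε.le hl.le N
  · refine ((hV_grid.stronglyAdapted j).measurable.sub ?_).stronglyMeasurable
    exact @measurable_resetValue Ω (gridFiltration 𝒻 hh j) ε
      (fun i => V ((j / R * R + i : ℕ) * h)) (j % R) fun i hi =>
      (hV_grid.stronglyAdapted (j / R * R + i)).measurable.mono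
        ((gridFiltration 𝒻 hh).mono (by have := h_index j; omega)) le_rfl
  · have h_reset := abs_sub_resetValue_le hε.le (fun i => V ((j / R * R + i : ℕ) * h) ω) (j % R)
    rwa [h_index] at h_reset

lemma tendstoInMeasure_runningMax_blockResetSum (hV : ∀ s, Measurable (V s))
    (hV0 : ∀ s ω, 0 ≤ V s ω) (hVb : ∀ s ω, V s ω ≤ b)
    (hV_cadlag : ∀ᵐ ω ∂μ, IsCadlagOn (fun s => V s ω) t) (ht : 0 < t) {ε : ℝ} (hε : 0 < ε)
    (r : ℕ → ℕ) :
    TendstoInMeasure μ (fun k ω => runningMax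
      (blockResetSum ε (2 ^ r k) fun j => V (j * (t / 2 ^ (k + r k))) ω) (2 ^ k)) atTop
      (fun _ => 0) := by
  refine tendstoInMeasure_of_tendsto_ae (fun k => ?_) ?_
  · refine (measurable_runningMax _ fun J _ => ?_).aestronglyMeasurable
    refine Finset.measurable_fun_sum _ fun c _ => Finset.measurable_fun_sum _ fun a _ => ?_
    exact ((measurable_resetValue ε a fun i _ => hV _).sub (hV _)).mul ((hV _).sub (hV _))
  · filter_upwards [hV_cadlag] with ω hω
    exact hω.tendsto_runningMax_blockResetSum (b := b) (fun u v => abs_sub_le_iff.2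
      ⟨by linarith [hV0 u ω, hVb v ω], by linarith [hV0 v ω, hVb u ω]⟩) ht hε r

lemma tendstoInMeasure_runningMax_blockSum {𝒻 : Filtration ℝ m0} (hV : Submartingale V 𝒻 μ)
    (hV0 : ∀ s ω, 0 ≤ V s ω) (hVb : ∀ s ω, V s ω ≤ b)
    (hV_cadlag : ∀ᵐ ω ∂μ, IsCadlagOn (fun s => V s ω) t) (ht : 0 < t) (r : ℕ → ℕ) :
    TendstoInMeasure μ (fun k ω => runningMax
      (blockSum (2 ^ r k) fun j => V (j * (t / 2 ^ (k + r k))) ω) (2 ^ k)) atTop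
      (fun _ => 0) := by
  rw [tendstoInMeasure_iff_measureReal_norm]
  intro l hl
  simp only [sub_zero, Real.norm_of_nonneg runningMax_nonneg]
  rw [Metric.tendsto_nhds]
  intro η hη
  obtain ⟨ε, hε, h_fine⟩ := exists_forall_measureReal_runningMax_sub_resetValue_le hV hV0 hVb
    (l := l / 3) (η := η / 2) (by positivity) (by positivity)
  have h_coarse := tendstoInMeasure_iff_measureReal_norm.1
    (tendstoInMeasure_runningMax_blockResetSum
      (fun s => ((hV.stronglyAdapted s).mono (𝒻.le s)).measurable) hV0 hVb hV_cadlag ht hε r)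
    (l / 3) (by positivity)
  simp only [sub_zero, Real.norm_of_nonneg runningMax_nonneg] at h_coarse
  filter_upwards [h_coarse.eventually_lt_const (half_pos hη)] with k hk
  rw [Real.dist_eq, sub_zero, abs_of_nonneg measureReal_nonneg]
  have h_fine_k := h_fine (t / 2 ^ (k + r k)) (2 ^ r k) (2 ^ k * 2 ^ r k) (by positivity)
  refine lt_of_le_of_lt ((measureReal_mono fun ω hω => ?_).trans (measureReal_union_le _ _))
    (add_lt_add_of_lt_of_le hk h_fine_k |>.trans_eq (add_halves η))
  by_contra h_not
  simp only [mem_union, mem_ofPred_eq, not_or, not_le, not_lt] at h_not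
  obtain ⟨h_reset, h_steps⟩ := h_not
  have h_le : runningMax (blockSum (2 ^ r k) fun j => V (j * (t / 2 ^ (k + r k))) ω) (2 ^ k)
      ≤ l / 3 + l / 3 := runningMax_le_iff.2 fun J hJ => by
    rw [blockSum_eq_add_blockResetSum ε]
    exact (abs_add_le _ _).trans (add_le_add (runningMax_le_iff.1 h_reset.le J hJ)
      (runningMax_le_iff.1 h_steps (J * 2 ^ r k) (Nat.mul_le_mul_right _ hJ)))
  have h_ge : l ≤ _ := hω
  linarith

end Submartingale

section InMeasure

variable {m0 : MeasurableSpace Ω} {μ : Measure Ω}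

lemma tendstoInMeasure_zero_of_abs_le_add {ι : Type*} {l : Filter ι} {F f g : ι → Ω → ℝ} {c : ℝ}
    (hc : 0 < c) (hf : TendstoInMeasure μ f l fun _ => 0)
    (hg : TendstoInMeasure μ g l fun _ => 0)
    (h_le : ∀ i ω, |F i ω| ≤ c * (|f i ω| + |g i ω|)) : TendstoInMeasure μ F l fun _ => 0 := by
  rw [tendstoInMeasure_iff_norm] at hf hg ⊢
  intro ε hε
  have h_sum := (hf (ε / (2 * c)) (by positivity)).add (hg (ε / (2 * c)) (by positivity))
  rw [add_zero] at h_sum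
  refine tendsto_of_tendsto_of_tendsto_of_le_of_le tendsto_const_nhds h_sum (fun _ => zero_le)
    fun i => (measure_mono fun ω hω => ?_).trans (measure_union_le _ _)
  by_contra h_not
  simp only [sub_zero, Real.norm_eq_abs, mem_union, mem_ofPred_eq, not_or, not_le] at h_not hω
  have h_lt : c * (|f i ω| + |g i ω|) < c * (ε / (2 * c) + ε / (2 * c)) := by
    gcongr
    exacts [h_not.1, h_not.2]
  refine ((hω.trans (h_le i ω)).trans_lt h_lt).ne ?_
  field_simp
  ring

lemma tendstoInMeasure_runningMax {ι : Type*} {l : Filter ι} {S : ι → ℕ → Ω → ℝ} {N : ℕ}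
    (h : ∀ J ≤ N, TendstoInMeasure μ (fun i => S i J) l fun _ => 0) :
    TendstoInMeasure μ (fun i ω => runningMax (fun J => S i J ω) N) l fun _ => 0 := by
  simp only [tendstoInMeasure_iff_norm] at h ⊢
  intro ε hε
  have h_sum := tendsto_finsetSum (Finset.range (N + 1)) fun J hJ =>
    h J (Nat.lt_succ_iff.1 (Finset.mem_range.1 hJ)) (ε / 2) (half_pos hε)
  rw [Finset.sum_const_zero] at h_sum
  refine tendsto_of_tendsto_of_tendsto_of_le_of_le tendsto_const_nhds h_sum (fun _ => zero_le)
    fun i => (measure_mono fun ω hω => ?_).trans (measure_biUnion_finset_le _ _)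
  rw [mem_ofPred_eq, sub_zero, Real.norm_of_nonneg runningMax_nonneg] at hω
  obtain ⟨J, hJ, h_lt⟩ := lt_runningMax_iff.1 ((half_lt_self hε).trans_le hω)
  exact mem_biUnion (Finset.mem_coe.2 (Finset.mem_range.2 (Nat.lt_succ_of_le hJ)))
    (by rw [mem_ofPred_eq, sub_zero]; exact h_lt.le)

lemma tendstoInMeasure_of_eventually_eq [IsFiniteMeasure μ] {F : ℕ → Ω → ℝ}
    {f : ℕ → ℕ → Ω → ℝ} (hF : ∀ k, Measurable (F k)) (hf : ∀ n k, Measurable (f n k))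
    (h_lim : ∀ n, TendstoInMeasure μ (f n) atTop fun _ => 0)
    (h_eq : ∀ᵐ ω ∂μ, ∀ᶠ n in atTop, ∀ k, f n k ω = F k ω) :
    TendstoInMeasure μ F atTop fun _ => 0 := by
  set E : ℕ → Set Ω := fun n => {ω | ∀ k, f n k ω = F k ω}ᶜ
  have hE : ∀ n, MeasurableSet (E n) := fun n =>
    (Measurable.forall fun k => (measurableSet_eq_fun (hf n k) (hF k)).mem).setOf.compl
  have hE_lim : Tendsto (fun n => μ (E n)) atTop (nhds 0) := by
    rw [← measure_empty (μ := μ)]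
    refine tendsto_measure_of_ae_tendsto_indicator_of_isFiniteMeasure atTop MeasurableSet.empty
      hE ?_
    filter_upwards [h_eq] with ω hω
    filter_upwards [hω] with n hn
    simp [E, hn]
  intro ε hε
  rw [ENNReal.tendsto_nhds_zero]
  intro η hη
  obtain ⟨n, hn⟩ := (ENNReal.tendsto_nhds_zero.1 hE_lim (η / 2) (ENNReal.half_pos hη.ne')).exists
  filter_upwards [ENNReal.tendsto_nhds_zero.1 (h_lim n ε hε) (η / 2) (ENNReal.half_pos hη.ne')]
    with k hk
  refine ((measure_mono fun ω hω => ?_).trans (measure_union_le _ _)).trans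
    ((add_le_add hk hn).trans_eq (ENNReal.add_halves η))
  by_contra h_not
  simp only [E, mem_union, mem_compl_iff, mem_ofPred_eq, not_or, not_not] at h_not hω
  exact h_not.1 (h_not.2 k ▸ hω)

lemma exists_tendstoInMeasure_diagonal {f : ℕ → ℕ → Ω → ℝ}
    (h : ∀ k, TendstoInMeasure μ (f k) atTop fun _ => 0) :
    ∃ r : ℕ → ℕ, TendstoInMeasure μ (fun k => f k (r k)) atTop fun _ => 0 := by
  have h_pos : ∀ k : ℕ, (0 : ENNReal) < (k : ENNReal)⁻¹ := fun k =>
    ENNReal.inv_pos.2 (ENNReal.natCast_ne_top k)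
  have h_exists : ∀ k : ℕ, ∃ r, μ {ω | (k : ENNReal)⁻¹ ≤ edist (f k r ω) 0} ≤ (k : ENNReal)⁻¹ :=
    fun k => (ENNReal.tendsto_nhds_zero.1 (h k _ (h_pos k)) _ (h_pos k)).exists
  choose r hr using h_exists
  refine ⟨r, fun ε hε => ?_⟩
  refine tendsto_of_tendsto_of_tendsto_of_le_of_le' tendsto_const_nhds
    ENNReal.tendsto_inv_nat_nhds_zero (.of_forall fun _ => zero_le) ?_
  filter_upwards [ENNReal.tendsto_inv_nat_nhds_zero.eventually_le_const hε] with k hk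
  exact (measure_mono fun ω hω => hk.trans hω).trans (hr k)

end InMeasure

section QuadraticVariation

/-- The partition of `[0, b]`, where `b = J * h`, into `J * 2 ^ r` intervals of length
`h / 2 ^ r`. -/
noncomputable def dyadicPartition {h b : ℝ} (hh : 0 ≤ h) (J : ℕ) (hb : J * h = b) :
    PartitionSeq 0 b where
  num r := J * 2 ^ r
  pt r j := j * (h / 2 ^ r)
  first r := by simp
  last r := by rw [← hb, ← two_pow_mul_div_two_pow h r]; push_cast; field_simp
  mono r i j hij := mul_le_mul_of_nonneg_right (Nat.cast_le.2 hij) (by positivity)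
  mesh ε hε := by
    filter_upwards [(tendsto_div_two_pow h).eventually_lt_const hε] with r hr i _
    push_cast
    linarith

lemma blockSum_eq_of_eq_const_sub {R J : ℕ} {X Y : ℕ → ℝ} {c : ℝ}
    (hXY : ∀ j ≤ J * R, X j = c - Y j) : blockSum R X J = blockSum R Y J := by
  refine Finset.sum_congr rfl fun i hi => Finset.sum_congr rfl fun a ha => ?_
  have h_le : i * R + a + 1 ≤ J * R :=
    calc i * R + a + 1 ≤ (i + 1) * R := by
          rw [Nat.succ_mul]; have := Finset.mem_range.1 ha; omega
      _ ≤ J * R := Nat.mul_le_mul_right _ (Finset.mem_range.1 hi)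
  rw [hXY _ h_le, hXY (i * R + a) (by omega), hXY (i * R) (by omega)]
  ring

variable {m0 : MeasurableSpace Ω} {μ : Measure Ω} {m A Q : ℝ → Ω → ℝ} {t : ℝ}

lemma exists_tendstoInMeasure_runningMax_sum_sq_sub (hQ : IsQuadCovar μ m m Q)
    (hQ0 : ∀ᵐ ω ∂μ, Q 0 ω = 0) (ht : 0 < t) :
    ∃ r : ℕ → ℕ, TendstoInMeasure μ (fun k ω => runningMax (fun J =>
      ∑ j ∈ Finset.range (J * 2 ^ r k), (m ((j + 1 : ℕ) * (t / 2 ^ (k + r k))) ω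
        - m (j * (t / 2 ^ (k + r k))) ω) ^ 2 - Q (J * (t / 2 ^ k)) ω) (2 ^ k)) atTop
      fun _ => 0 := by
  refine exists_tendstoInMeasure_diagonal (f := fun k r ω => runningMax (fun J =>
    ∑ j ∈ Finset.range (J * 2 ^ r), (m ((j + 1 : ℕ) * (t / 2 ^ (k + r))) ω
      - m (j * (t / 2 ^ (k + r))) ω) ^ 2 - Q (J * (t / 2 ^ k)) ω) (2 ^ k)) fun k =>
    tendstoInMeasure_runningMax fun J _ => ?_
  rcases J.eq_zero_or_pos with rfl | hJ
  · refine TendstoInMeasure.congr_left (f := fun _ _ => 0) (fun r => ?_)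
      fun ε hε => by simp [hε.ne']
    filter_upwards [hQ0] with ω hω
    simp [hω]
  · have h_pos : 0 < J * (t / 2 ^ k) := by positivity
    have h_lim := hQ _ h_pos (dyadicPartition (by positivity) J rfl)
    rw [tendstoInMeasure_iff_norm] at h_lim ⊢
    simpa only [sub_zero, prodSum, dyadicPartition, div_div, ← pow_add, ← sq] using h_lim

variable [IsFiniteMeasure μ] {𝒻 : Filtration ℝ m0}

lemma exists_bounded_submartingale_eq (hm : Martingale m 𝒻 μ) (hA : Adapted 𝒻 A)
    (hA_mono : ∀ ω, Monotone fun s => A s ω) (hAm : ∀ s ω, A s ω ≤ m s ω)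
    (hm_rc : ∀ ω s, ContinuousWithinAt (fun s => m s ω) (Ici s) s)
    (hA_rc : ∀ ω s, ContinuousWithinAt (fun s => A s ω) (Ici s) s) {c : ℝ} (hc : 0 ≤ c) :
    ∃ V : ℝ → Ω → ℝ, Submartingale V 𝒻 μ ∧ (∀ s ω, 0 ≤ V s ω) ∧ (∀ s ω, V s ω ≤ c) ∧
      (∀ ω s, ContinuousWithinAt (fun s => V s ω) (Ici s) s) ∧
      ∀ s ω, 0 ≤ s → m s ω ≤ c + A 0 ω → V s ω = c + A 0 ω - m s ω := by
  refine ⟨fun s ω => max (c - m s ω + A (min s 0) ω) 0, ?_, fun s ω => le_max_right _ _,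
    fun s ω => max_le ?_ hc, fun ω s => ?_, fun s ω hs h_le => ?_⟩
  · exact submartingale_max_sub_add hm
      (fun s => (hA _).mono (𝒻.mono (min_le_left s 0)) le_rfl)
      (fun ω _ _ h => hA_mono ω (min_le_min_right 0 h))
      (fun s ω => (hA_mono ω (min_le_left s 0)).trans (hAm s ω)) c
  · linarith [hAm s ω, hA_mono ω (min_le_left s 0)]
  · exact ((continuousWithinAt_const.sub (hm_rc ω s)).add
      ((hA_rc ω (min s 0)).comp (f := fun s => min s 0) (by fun_prop)
        fun u (hu : s ≤ u) => min_le_min_right 0 hu)).max continuousWithinAt_const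
  · simp only [min_eq_right hs]
    rw [max_eq_left (by linarith)]
    ring

lemma tendstoInMeasure_runningMax_blockSum_martingale (hm : Martingale m 𝒻 μ)
    (hA : Adapted 𝒻 A) (hA_mono : ∀ ω, Monotone fun s => A s ω) (hAm : ∀ s ω, A s ω ≤ m s ω)
    (hm_rc : ∀ ω s, ContinuousWithinAt (fun s => m s ω) (Ici s) s)
    (hA_rc : ∀ ω s, ContinuousWithinAt (fun s => A s ω) (Ici s) s) (ht : 0 < t) (r : ℕ → ℕ) :
    TendstoInMeasure μ (fun k ω => runningMax
      (blockSum (2 ^ r k) fun j => m (j * (t / 2 ^ (k + r k))) ω) (2 ^ k)) atTop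
      (fun _ => 0) := by
  choose V hV hV0 hVb hV_rc hV_eq using fun n : ℕ =>
    exists_bounded_submartingale_eq hm hA hA_mono hAm hm_rc hA_rc n.cast_nonneg
  have h_meas : ∀ {W : ℝ → Ω → ℝ}, StronglyAdapted 𝒻 W → ∀ s, Measurable (W s) :=
    fun hW s => ((hW s).mono (𝒻.le s)).measurable
  refine tendstoInMeasure_of_eventually_eq
    (fun k => measurable_runningMax_blockSum _ _ fun j => h_meas hm.stronglyAdapted _)
    (fun n k => measurable_runningMax_blockSum _ _ fun j => h_meas (hV n).stronglyAdapted _)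
    (fun n => tendstoInMeasure_runningMax_blockSum
      (hV n) (hV0 n) (hVb n) (ae_isCadlagOn (hV n) (hV_rc n) ht (.of_forall fun ω =>
        ⟨n, fun s _ => (abs_of_nonneg (hV0 n s ω)).trans_le (hVb n s ω)⟩)) ht r) ?_
  filter_upwards [ae_exists_forall_abs_le hm hm_rc ht] with ω ⟨c, hc⟩
  filter_upwards [eventually_ge_atTop ⌈c - A 0 ω⌉₊] with n hn k
  refine runningMax_congr fun J hJ =>
    blockSum_eq_of_eq_const_sub (c := n + A 0 ω) fun j hj => ?_
  have h_mem := mul_div_two_pow_mem_Icc ht.le (hj.trans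
    ((Nat.mul_le_mul_right _ hJ).trans_eq (pow_add 2 k (r k)).symm))
  exact hV_eq n _ ω h_mem.1 (by linarith [(abs_le.1 (hc _ h_mem)).2, Nat.ceil_le.1 hn])

lemma tendstoInMeasure_runningMax_sum_sq_sub (hm : Martingale m 𝒻 μ)
    (hA : Adapted 𝒻 A) (hA_mono : ∀ ω, Monotone fun s => A s ω) (hAm : ∀ s ω, A s ω ≤ m s ω)
    (hm_rc : ∀ ω s, ContinuousWithinAt (fun s => m s ω) (Ici s) s)
    (hA_rc : ∀ ω s, ContinuousWithinAt (fun s => A s ω) (Ici s) s)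
    (hQ : IsQuadCovar μ m m Q) (hQ0 : ∀ᵐ ω ∂μ, Q 0 ω = 0) (ht : 0 < t) :
    TendstoInMeasure μ (fun k ω => runningMax (fun J => ∑ i ∈ Finset.range J,
      (m ((i + 1 : ℕ) * (t / 2 ^ k)) ω - m (i * (t / 2 ^ k)) ω) ^ 2 - Q (J * (t / 2 ^ k)) ω)
      (2 ^ k)) atTop fun _ => 0 := by
  obtain ⟨r, hr⟩ := exists_tendstoInMeasure_runningMax_sum_sq_sub hQ hQ0 ht
  refine tendstoInMeasure_zero_of_abs_le_add two_pos hr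
    (tendstoInMeasure_runningMax_blockSum_martingale hm hA hA_mono hAm hm_rc hA_rc ht r)
    fun k ω => ?_
  have h_grid : ∀ i : ℕ, ((i * 2 ^ r k : ℕ) : ℝ) * (t / 2 ^ (k + r k)) = i * (t / 2 ^ k) := by
    intro i
    rw [pow_add]
    push_cast
    field_simp
  have h_blocks := sum_sq_blocks_eq (2 ^ r k) fun j => m (j * (t / 2 ^ (k + r k))) ω
  simp only [h_grid] at h_blocks
  simp only [abs_of_nonneg runningMax_nonneg, h_blocks]
  refine runningMax_le_iff.2 fun J hJ => ?_
  rw [add_sub_right_comm]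
  refine (abs_add_le _ _).trans ?_
  rw [mul_add, abs_mul, abs_two]
  refine add_le_add (le_mul_of_one_le_left runningMax_nonneg one_le_two |>.trans' ?_) ?_
  · exact abs_le_runningMax (S := fun J => ∑ j ∈ Finset.range (J * 2 ^ r k),
      (m ((j + 1 : ℕ) * (t / 2 ^ (k + r k))) ω - m (j * (t / 2 ^ (k + r k))) ω) ^ 2
        - Q (J * (t / 2 ^ k)) ω) hJ
  · gcongr
    exact abs_le_runningMax hJ

lemma isQuadCovar_ae_eq_zero (hm : Martingale m 𝒻 μ)
    (hA : Adapted 𝒻 A) (hA_mono : ∀ ω, Monotone fun s => A s ω) (hAm : ∀ s ω, A s ω ≤ m s ω)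
    (hm_rc : ∀ ω s, ContinuousWithinAt (fun s => m s ω) (Ici s) s)
    (hA_rc : ∀ ω s, ContinuousWithinAt (fun s => A s ω) (Ici s) s)
    (hQ : IsQuadCovar μ m m Q) (hQ_rc : ∀ ω, ContinuousWithinAt (fun s => Q s ω) (Ici 0) 0) :
    ∀ᵐ ω ∂μ, Q 0 ω = 0 := by
  have hQ' : IsQuadCovar μ m m (update Q 0 0) := fun t ht => by
    rw [update_of_ne ht.ne']
    exact hQ t ht
  obtain ⟨φ, hφ, h_lim⟩ := (tendstoInMeasure_runningMax_sum_sq_sub hm hA hA_mono hAm hm_rc hA_rc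
    hQ' (.of_forall fun ω => by simp) one_pos).exists_seq_tendsto_ae
  filter_upwards [h_lim] with ω hω
  have h_grid : Tendsto (fun k => 1 / (2 : ℝ) ^ φ k) atTop (nhdsWithin 0 (Ici 0)) :=
    tendsto_nhdsWithin_iff.2 ⟨(tendsto_div_two_pow 1).comp hφ.tendsto_atTop,
      .of_forall fun k => mem_Ici.2 (by positivity)⟩
  have h_sq : Tendsto (fun k => |(m (1 / 2 ^ φ k) ω - m 0 ω) ^ 2 - Q (1 / 2 ^ φ k) ω|) atTop
      (nhds 0) := by
    refine squeeze_zero (fun _ => abs_nonneg _) (fun k => ?_) hω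
    have h_one := abs_le_runningMax (N := 2 ^ φ k) (J := 1) (S := fun J =>
      ∑ i ∈ Finset.range J, (m ((i + 1 : ℕ) * (1 / 2 ^ φ k)) ω - m (i * (1 / 2 ^ φ k)) ω) ^ 2
        - update Q 0 0 (J * (1 / 2 ^ φ k)) ω) Nat.one_le_two_pow
    simpa using h_one
  have h_lim' : Tendsto (fun k => |(m (1 / 2 ^ φ k) ω - m 0 ω) ^ 2 - Q (1 / 2 ^ φ k) ω|) atTop
      (nhds |(m 0 ω - m 0 ω) ^ 2 - Q 0 ω|) :=
    (((((hm_rc ω 0).tendsto.comp h_grid).sub_const _).pow 2).sub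
      ((hQ_rc ω).tendsto.comp h_grid)).abs
  simpa using tendsto_nhds_unique h_lim' h_sq

end QuadraticVariation

section StepIntegral

variable {ν : Measure ℝ} {t C : ℝ} {f g : ℝ → ℝ}

lemma setIntegral_cellIndex_mul {h : ℝ} {N : ℕ} {F : ℕ → ℝ} (hh : 0 < h)
    (hg : IntegrableOn g (Ioc 0 (N * h)) ν) (hC : ∀ i < N, |F i| ≤ C) :
    ∫ u in Ioc 0 (N * h), F (cellIndex h u) * g u ∂ν
      = ∑ i ∈ Finset.range N, F i * ∫ u in Ioc (i * h) ((i + 1 : ℕ) * h), g u ∂ν := by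
  have h_int : IntegrableOn (fun u => F (cellIndex h u) * g u) (Ioc 0 (N * h)) ν := by
    refine hg.bdd_mul (c := C)
      (measurable_from_nat.comp (cellIndex_mono hh).measurable).aestronglyMeasurable ?_
    filter_upwards [ae_restrict_mem measurableSet_Ioc] with u hu
    exact hC _ (cellIndex_lt_of_le_mul hh hu.1 hu.2)
  have h_mono : ∀ i : ℕ, i * h ≤ (i + 1 : ℕ) * h := fun i => by gcongr; exact i.le_succ
  have h_cell : ∀ i ∈ Finset.range N,
      F i * ∫ u in Ioc (i * h) ((i + 1 : ℕ) * h), g u ∂ν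
        = ∫ u in (i * h)..((i + 1 : ℕ) * h), F (cellIndex h u) * g u ∂ν := fun i _ => by
    rw [intervalIntegral.integral_of_le (h_mono i), ← integral_const_mul]
    exact setIntegral_congr_fun measurableSet_Ioc fun u hu => by
      simp only [cellIndex_eq_of_mem_Ioc hh hu]
  rw [Finset.sum_congr rfl h_cell, intervalIntegral.sum_integral_adjacent_intervals
    (a := fun i : ℕ => i * h), Nat.cast_zero, zero_mul,
    intervalIntegral.integral_of_le (by positivity)]
  intro i hi
  rw [intervalIntegrable_iff_integrableOn_Ioc_of_le (h_mono i)]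
  refine h_int.mono_set (Ioc_subset_Ioc (by positivity) ?_)
  gcongr
  exact hi

variable {h : ℕ → ℝ} {N : ℕ → ℕ} {F : ℕ → ℕ → ℝ} (hh : ∀ k, 0 < h k) (hN : ∀ k, N k * h k = t)
  (hC : ∀ k, ∀ i < N k, |F k i| ≤ C)
  (hF : ∀ u ∈ Ioc 0 t, Tendsto (fun k => F k (cellIndex (h k) u)) atTop (nhds (f u)))
include hh hN hC hF

lemma integrableOn_of_tendsto_cellIndex [IsLocallyFiniteMeasure ν] :
    IntegrableOn f (Ioc 0 t) ν := by
  refine .of_bound measure_Ioc_lt_top (aestronglyMeasurable_of_tendsto_ae atTop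
    (f := fun k u => F k (cellIndex (h k) u)) (fun k => ?_) ?_) C ?_
  · exact (measurable_from_nat.comp (cellIndex_mono (hh k)).measurable).aestronglyMeasurable
  · filter_upwards [ae_restrict_mem measurableSet_Ioc] with u hu
    exact hF u hu
  · filter_upwards [ae_restrict_mem measurableSet_Ioc] with u hu
    exact le_of_tendsto (hF u hu).abs (.of_forall fun k =>
      hC k _ (cellIndex_lt_of_le_mul (hh k) hu.1 (hu.2.trans_eq (hN k).symm)))

lemma tendsto_sum_mul_setIntegral (hg : IntegrableOn g (Ioc 0 t) ν) :
    Tendsto (fun k => ∑ i ∈ Finset.range (N k),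
      F k i * ∫ u in Ioc (i * h k) ((i + 1 : ℕ) * h k), g u ∂ν) atTop
      (nhds (∫ u in Ioc 0 t, f u * g u ∂ν)) := by
  have h_step : ∀ k, ∑ i ∈ Finset.range (N k),
      F k i * ∫ u in Ioc (i * h k) ((i + 1 : ℕ) * h k), g u ∂ν
        = ∫ u in Ioc 0 t, F k (cellIndex (h k) u) * g u ∂ν := fun k => by
    rw [← setIntegral_cellIndex_mul (hh k) (by rwa [hN k]) (hC k), hN k]
  simp_rw [h_step]
  refine tendsto_integral_of_dominated_convergence (fun u => C * |g u|) (fun k => ?_)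
    (hg.abs.const_mul C) (fun k => ?_) ?_
  · exact (measurable_from_nat.comp
      (cellIndex_mono (hh k)).measurable).aestronglyMeasurable.mul hg.aestronglyMeasurable
  · filter_upwards [ae_restrict_mem measurableSet_Ioc] with u hu
    rw [Real.norm_eq_abs, abs_mul]
    gcongr
    exact hC k _ (cellIndex_lt_of_le_mul (hh k) hu.1 (hu.2.trans_eq (hN k).symm))
  · filter_upwards [ae_restrict_mem measurableSet_Ioc] with u hu
    exact (hF u hu).mul_const _

lemma tendsto_sum_mul_measureReal [IsLocallyFiniteMeasure ν] :
    Tendsto (fun k => ∑ i ∈ Finset.range (N k),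
      F k i * ν.real (Ioc (i * h k) ((i + 1 : ℕ) * h k))) atTop
      (nhds (∫ u in Ioc 0 t, f u ∂ν)) := by
  simpa using tendsto_sum_mul_setIntegral (ν := ν) (g := fun _ => 1) hh hN hC hF
    (integrableOn_const measure_Ioc_lt_top.ne)

end StepIntegral

section WeightedSum

lemma tendsto_sum_mul_sub_zero {w S : ℕ → ℕ → ℝ} {N : ℕ → ℕ} {C D : ℝ}
    (hw : ∀ k, ∀ j ≤ N k, |w k j| ≤ C)
    (hw_reset : ∀ ε > 0, ∃ B : ℕ, ∀ k, resetCount ε (w k) (N k) ≤ B)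
    (hS : Tendsto (fun k => runningMax (S k) (N k)) atTop (nhds 0))
    (hS_var : ∀ k, ∑ j ∈ Finset.range (N k), |S k (j + 1) - S k j|
      ≤ runningMax (S k) (N k) + D) :
    Tendsto (fun k => ∑ j ∈ Finset.range (N k), w k j * (S k (j + 1) - S k j)) atTop
      (nhds 0) := by
  have hC : 0 ≤ C := (abs_nonneg _).trans (hw 0 0 (N 0).zero_le)
  rw [Metric.tendsto_nhds]
  intro η hη
  obtain ⟨ε, hε, h_small⟩ : ∃ ε > 0, ε * D < η := by
    refine ⟨η / (|D| + 1), by positivity, ?_⟩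
    rw [div_mul_eq_mul_div, div_lt_iff₀ (by positivity)]
    gcongr
    linarith [le_abs_self D]
  obtain ⟨B, hB⟩ := hw_reset ε hε
  have h_lim : Tendsto (fun k => ε * (runningMax (S k) (N k) + D)
      + 2 * C * runningMax (S k) (N k) * (1 + 2 * B)) atTop (nhds (ε * D)) := by
    simpa using ((hS.add_const D).const_mul ε).add
      ((hS.const_mul (2 * C)).mul_const (1 + 2 * (B : ℝ)))
  filter_upwards [h_lim.eventually_lt_const h_small] with k hk
  rw [Real.dist_eq, sub_zero]
  refine lt_of_le_of_lt ((abs_sum_mul_sub_le hε.le (hw k)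
    fun j hj => abs_le_runningMax hj).trans ?_) hk
  have h_max : 0 ≤ runningMax (S k) (N k) := runningMax_nonneg
  gcongr
  exacts [hS_var k, hB k]

end WeightedSum

section GridInverse

/-- The inverse of `m − A` on a cell of the grid of step `h`, with `m` taken at the right end and
`A` at the left end; it approximates `(m − A_−)⁻¹`. -/
noncomputable def gridInv (m A : ℝ → ℝ) (h : ℝ) (i : ℕ) : ℝ := (m ((i + 1 : ℕ) * h) - A (i * h))⁻¹

variable {c x y : ℝ}

lemma inv_mem_Icc (hc : 0 < c) (hx : c ≤ x) : x⁻¹ ∈ Icc 0 c⁻¹ :=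
  ⟨inv_nonneg.2 (hc.le.trans hx), inv_anti₀ hc hx⟩

lemma abs_inv_sub_inv_le (hc : 0 < c) (hx : c ≤ x) (hy : c ≤ y) :
    |y⁻¹ - x⁻¹| ≤ c⁻¹ ^ 2 * |y - x| := by
  have hx0 : 0 < x := hc.trans_le hx
  have hy0 : 0 < y := hc.trans_le hy
  have h_eq : y⁻¹ - x⁻¹ = x⁻¹ * y⁻¹ * (x - y) := by field_simp
  rw [h_eq, abs_mul, abs_sub_comm x y, abs_of_pos (by positivity), sq]
  gcongr

lemma abs_sq_mul_sub_sq_mul_le {K x' y' : ℝ} (hx : x ∈ Icc 0 K) (hx' : x' ∈ Icc 0 K)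
    (hy : y ∈ Icc 0 K) : |x ^ 2 * y - x' ^ 2 * y'| ≤ K ^ 2 * (2 * |x - x'| + |y - y'|) := by
  obtain ⟨hx0, hxK⟩ := hx
  obtain ⟨hx'0, hx'K⟩ := hx'
  obtain ⟨hy0, hyK⟩ := hy
  calc |x ^ 2 * y - x' ^ 2 * y'|
      = |(x + x') * y * (x - x') + x' ^ 2 * (y - y')| := by ring_nf
    _ ≤ (x + x') * y * |x - x'| + x' ^ 2 * |y - y'| := by
        refine (abs_add_le _ _).trans_eq ?_
        rw [abs_mul, abs_mul (x' ^ 2), abs_of_nonneg (by positivity : 0 ≤ (x + x') * y),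
          abs_of_nonneg (sq_nonneg x')]
    _ ≤ (K + K) * K * |x - x'| + K ^ 2 * |y - y'| := by
        have hK : 0 ≤ K + K := add_nonneg (hx0.trans hxK) (hx0.trans hxK)
        gcongr
    _ = K ^ 2 * (2 * |x - x'| + |y - y'|) := by ring

lemma inv_sub_inv_eq_of_eq_add {K : Type*} [Field K] {x y z d a : K} (q J : K)
    (hx : x ≠ 0) (hy : y ≠ 0) (hz : z ≠ 0) (hzx : z = x + d) (hzy : z = y + a) :
    y⁻¹ - x⁻¹ = x⁻¹ ^ 2 * z⁻¹ * (d ^ 2 - q) + (x⁻¹ ^ 2 * z⁻¹ * q - x⁻¹ ^ 2 * J)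
      + y⁻¹ * z⁻¹ * a - x⁻¹ ^ 2 * (d - J) := by
  obtain rfl : d = z - x := eq_sub_of_add_eq' hzx.symm
  obtain rfl : a = z - y := eq_sub_of_add_eq' hzy.symm
  field_simp
  ring

variable {m A : ℝ → ℝ} {T h : ℝ} {i j N : ℕ}

section Bounds

variable (hA : Monotone A) (hG : ∀ s ∈ Icc 0 T, c ≤ m s - A s) (hh : 0 ≤ h)
include hA hG hh

lemma le_sub_of_add_one_mul_le (hi : (i + 1 : ℕ) * h ≤ T) :
    c ≤ m ((i + 1 : ℕ) * h) - A (i * h) := by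
  have h_mono : A (i * h) ≤ A ((i + 1 : ℕ) * h) := hA (by gcongr; exact i.le_succ)
  linarith [hG _ ⟨by positivity, hi⟩]

lemma gridInv_mem_Icc (hc : 0 < c) (hi : (i + 1 : ℕ) * h ≤ T) : gridInv m A h i ∈ Icc 0 c⁻¹ :=
  inv_mem_Icc hc (le_sub_of_add_one_mul_le hA hG hh hi)

end Bounds

lemma abs_inv_sq_mul_gridInv_sub_le (hA : Monotone A) (hc : 0 < c)
    (hG : ∀ s ∈ Icc 0 T, c ≤ m s - A s) (hh : 0 ≤ h) (hi : (i + 1 : ℕ) * h ≤ T)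
    (hj : (j + 1 : ℕ) * h ≤ T) :
    |(m (j * h) - A (j * h))⁻¹ ^ 2 * gridInv m A h j
        - (m (i * h) - A (i * h))⁻¹ ^ 2 * gridInv m A h i|
      ≤ c⁻¹ ^ 4 * (2 * |m (j * h) - m (i * h)| + 3 * |A (j * h) - A (i * h)|
        + |m ((j + 1 : ℕ) * h) - m ((i + 1 : ℕ) * h)|) := by
  have h_low : ∀ l : ℕ, (l + 1 : ℕ) * h ≤ T → c ≤ m (l * h) - A (l * h) := fun l hl =>
    hG _ ⟨by positivity, le_trans (by gcongr; exact l.le_succ) hl⟩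
  calc _ ≤ c⁻¹ ^ 2 * (2 * |(m (j * h) - A (j * h))⁻¹ - (m (i * h) - A (i * h))⁻¹|
        + |gridInv m A h j - gridInv m A h i|) :=
        abs_sq_mul_sub_sq_mul_le (inv_mem_Icc hc (h_low j hj)) (inv_mem_Icc hc (h_low i hi))
          (gridInv_mem_Icc hA hG hh hc hj)
    _ ≤ c⁻¹ ^ 2 * (2 * (c⁻¹ ^ 2 * |(m (j * h) - A (j * h)) - (m (i * h) - A (i * h))|)
        + c⁻¹ ^ 2 * |(m ((j + 1 : ℕ) * h) - A (j * h)) - (m ((i + 1 : ℕ) * h) - A (i * h))|) := by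
        gcongr
        · exact abs_inv_sub_inv_le hc (h_low i hi) (h_low j hj)
        · exact abs_inv_sub_inv_le hc (le_sub_of_add_one_mul_le hA hG hh hi)
            (le_sub_of_add_one_mul_le hA hG hh hj)
    _ ≤ c⁻¹ ^ 2 * (2 * (c⁻¹ ^ 2 * (|m (j * h) - m (i * h)| + |A (j * h) - A (i * h)|))
        + c⁻¹ ^ 2 * (|m ((j + 1 : ℕ) * h) - m ((i + 1 : ℕ) * h)|
          + |A (j * h) - A (i * h)|)) := by
        gcongr <;> rw [sub_sub_sub_comm] <;> exact abs_sub _ _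
    _ = _ := by ring

lemma IsCadlagOn.exists_card_filter_osc_le {f g : ℝ → ℝ} (hf : IsCadlagOn f T)
    (hg : IsCadlagOn g T) {ε : ℝ} (hε : 0 < ε) :
    ∃ S : Finset ℝ, ∀ u v, 0 ≤ u → u ≤ v → v ≤ T →
      (S.filter (· ≤ u)).card = (S.filter (· ≤ v)).card → |f v - f u| ≤ ε ∧ |g v - g u| ≤ ε := by
  classical
  obtain ⟨S, hS⟩ := hf.exists_osc_le hε
  obtain ⟨R, hR⟩ := hg.exists_osc_le hε
  refine ⟨S ∪ R, fun u v hu huv hv h_eq => ?_⟩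
  have h_not := (card_filter_le_eq_iff huv).1 h_eq
  exact ⟨hS u v hu huv hv fun s hs => h_not s (Finset.mem_union_left _ hs),
    hR u v hu huv hv fun s hs => h_not s (Finset.mem_union_right _ hs)⟩

/-- The label of the cell `i` counts the large oscillations of `m` and `A` before its two ends. -/
lemma exists_resetCount_inv_sq_mul_gridInv_le (hm : IsCadlagOn m T) (hA : IsCadlagOn A T)
    (hA_mono : Monotone A) (hc : 0 < c) (hG : ∀ s ∈ Icc 0 T, c ≤ m s - A s) {ε : ℝ} (hε : 0 < ε) :
    ∃ B : ℕ, ∀ (h : ℝ) (N : ℕ), 0 ≤ h → (N + 1 : ℕ) * h ≤ T →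
      resetCount ε (fun i => (m (i * h) - A (i * h))⁻¹ ^ 2 * gridInv m A h i) N ≤ B := by
  have hδ : 0 < ε / (6 * c⁻¹ ^ 4) := by positivity
  obtain ⟨S, hS⟩ := hm.exists_card_filter_osc_le hA hδ
  refine ⟨(S.card + S.card : ℕ), fun h N hh hN => ?_⟩
  let count : ℝ → ℕ := fun u => (S.filter (· ≤ u)).card
  have h_grid : ∀ i j : ℕ, i ≤ j → i * h ≤ j * h := fun i j hij => by gcongr
  refine (le_add_self.trans (add_resetCount_le
    (label := fun i => count (i * h) + count ((i + 1 : ℕ) * h)) (fun i j hij _ => ?_)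
    fun i j hij hjN h_eq => ?_)).trans
      (add_le_add (Finset.card_filter_le _ _) (Finset.card_filter_le _ _))
  · exact add_le_add (card_filter_le_mono _ (h_grid i j hij))
      (card_filter_le_mono _ (h_grid _ _ (Nat.succ_le_succ hij)))
  have h_end : ∀ l ≤ N, (l + 1 : ℕ) * h ≤ T := fun l hl =>
    (h_grid _ _ (Nat.succ_le_succ hl)).trans hN
  have h_left : count (i * h) ≤ count (j * h) := card_filter_le_mono _ (h_grid i j hij)
  have h_right : count ((i + 1 : ℕ) * h) ≤ count ((j + 1 : ℕ) * h) :=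
    card_filter_le_mono _ (h_grid _ _ (Nat.succ_le_succ hij))
  obtain ⟨hm_left, hA_left⟩ := hS (i * h) (j * h) (by positivity) (h_grid i j hij)
    ((h_grid _ _ j.le_succ).trans (h_end j hjN))
      (show count (i * h) = count (j * h) by omega)
  obtain ⟨hm_right, -⟩ := hS ((i + 1 : ℕ) * h) ((j + 1 : ℕ) * h) (by positivity)
    (h_grid _ _ (Nat.succ_le_succ hij)) (h_end j hjN)
      (show count ((i + 1 : ℕ) * h) = count ((j + 1 : ℕ) * h) by omega)
  calc _ ≤ c⁻¹ ^ 4 * (2 * |m (j * h) - m (i * h)| + 3 * |A (j * h) - A (i * h)|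
        + |m ((j + 1 : ℕ) * h) - m ((i + 1 : ℕ) * h)|) :=
        abs_inv_sq_mul_gridInv_sub_le hA_mono hc hG hh (h_end i (hij.trans hjN)) (h_end j hjN)
    _ ≤ c⁻¹ ^ 4 * (2 * (ε / (6 * c⁻¹ ^ 4)) + 3 * (ε / (6 * c⁻¹ ^ 4)) + ε / (6 * c⁻¹ ^ 4)) := by
        gcongr
    _ = ε := by field_simp; norm_num

end GridInverse

section Pathwise

variable {m A Q : ℝ → ℝ} {T t c u : ℝ} {h : ℕ → ℝ} {N : ℕ → ℕ} {ν : Measure ℝ}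

lemma IsCadlagOn.of_monotone (hA : Monotone A) (hA_rc : ∀ s, ContinuousWithinAt A (Ici s) s) :
    IsCadlagOn A T :=
  ⟨hA_rc, fun s _ => ⟨leftLim A s, hA.tendsto_leftLim s⟩⟩

lemma IsCadlagOn.tendsto_leftLim (hm : IsCadlagOn m T) (hu : u ∈ Ioc 0 T) :
    Tendsto m (nhdsWithin u (Iio u)) (nhds (leftLim m u)) := by
  obtain ⟨l, hl⟩ := hm.2 u hu
  rwa [leftLim_eq_of_tendsto hl]

lemma le_sub_leftLim (hA : Monotone A) (hG : c ≤ m u - A u) : c ≤ m u - leftLim A u := by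
  linarith [hA.leftLim_le le_rfl (x := u)]

lemma le_leftLim_sub_leftLim (hm : IsCadlagOn m T) (hA : IsCadlagOn A T)
    (hG : ∀ s ∈ Icc 0 T, c ≤ m s - A s) (hu : u ∈ Ioc 0 T) : c ≤ leftLim m u - leftLim A u := by
  refine ge_of_tendsto ((hm.tendsto_leftLim hu).sub (hA.tendsto_leftLim hu)) ?_
  filter_upwards [Ico_mem_nhdsLT hu.1] with s hs
  exact hG s ⟨hs.1, hs.2.le.trans hu.2⟩

section CellLimits

variable (hc : 0 < c) (hG : ∀ s ∈ Icc 0 T, c ≤ m s - A s) (hm : IsCadlagOn m T)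
  (hA : IsCadlagOn A T) (hh : ∀ k, 0 < h k) (h_lim : Tendsto h atTop (nhds 0)) (hu : u ∈ Ioc 0 T)
include hc hG hm hA hh h_lim hu

lemma tendsto_inv_sub_cellIndex_mul :
    Tendsto (fun k => (m (cellIndex (h k) u * h k) - A (cellIndex (h k) u * h k))⁻¹) atTop
      (nhds (leftLim m u - leftLim A u)⁻¹) := by
  have h_left := tendsto_cellIndex_mul hh h_lim hu.1
  exact (((hm.tendsto_leftLim hu).comp h_left).sub ((hA.tendsto_leftLim hu).comp h_left)).inv₀
    (hc.trans_le (le_leftLim_sub_leftLim hm hA hG hu)).ne'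

lemma tendsto_inv_sub_cellIndex_add_one_mul :
    Tendsto (fun k => (m ((cellIndex (h k) u + 1 : ℕ) * h k)
      - A ((cellIndex (h k) u + 1 : ℕ) * h k))⁻¹) atTop (nhds (m u - A u)⁻¹) := by
  have h_right := tendsto_cellIndex_add_one_mul hh h_lim hu.1
  exact (((hm.1 u).tendsto.comp h_right).sub ((hA.1 u).tendsto.comp h_right)).inv₀
    (hc.trans_le (hG u (Ioc_subset_Icc_self hu))).ne'

lemma tendsto_gridInv_cellIndex (hA_mono : Monotone A) :
    Tendsto (fun k => gridInv m A (h k) (cellIndex (h k) u)) atTop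
      (nhds (m u - leftLim A u)⁻¹) :=
  (((hm.1 u).tendsto.comp (tendsto_cellIndex_add_one_mul hh h_lim hu.1)).sub
    ((hA.tendsto_leftLim hu).comp (tendsto_cellIndex_mul hh h_lim hu.1))).inv₀
    (hc.trans_le (le_sub_leftLim hA_mono (hG u (Ioc_subset_Icc_self hu)))).ne'

end CellLimits

lemma sum_abs_sq_sub_sub_le {h : ℝ} (hQ : Monotone Q) (hh : 0 ≤ h) (N : ℕ) :
    ∑ i ∈ Finset.range N,
        |(m ((i + 1 : ℕ) * h) - m (i * h)) ^ 2 - (Q ((i + 1 : ℕ) * h) - Q (i * h))|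
      ≤ |∑ i ∈ Finset.range N, (m ((i + 1 : ℕ) * h) - m (i * h)) ^ 2 - Q (N * h)|
        + 2 * Q (N * h) - Q 0 := by
  have h_tel := Finset.sum_range_sub (fun i : ℕ => Q (i * h)) N
  rw [Nat.cast_zero, zero_mul] at h_tel
  calc _ ≤ ∑ i ∈ Finset.range N, ((m ((i + 1 : ℕ) * h) - m (i * h)) ^ 2
        + (Q ((i + 1 : ℕ) * h) - Q (i * h))) := by
        refine Finset.sum_le_sum fun i _ => (abs_sub _ _).trans_eq ?_
        rw [abs_of_nonneg (sq_nonneg _), abs_of_nonneg (sub_nonneg.2 (hQ ?_))]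
        gcongr
        exact i.le_succ
    _ = ∑ i ∈ Finset.range N, (m ((i + 1 : ℕ) * h) - m (i * h)) ^ 2 - Q (N * h)
        + 2 * Q (N * h) - Q 0 := by
        rw [Finset.sum_add_distrib, h_tel]
        ring
    _ ≤ _ := by
        gcongr
        exact le_abs_self _

lemma tendsto_sum_inv_sq_mul_gridInv_mul_sub (hc : 0 < c) (hG : ∀ s ∈ Icc 0 T, c ≤ m s - A s)
    (hm : IsCadlagOn m T) (hA : IsCadlagOn A T) (hA_mono : Monotone A) (hQ : Monotone Q)
    (hh : ∀ k, 0 ≤ h k) (hN : ∀ k, N k * h k = t) (hT : ∀ k, (N k + 1 : ℕ) * h k ≤ T)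
    (hS : Tendsto (fun k => runningMax (fun J => ∑ i ∈ Finset.range J,
      (m ((i + 1 : ℕ) * h k) - m (i * h k)) ^ 2 - Q (J * h k)) (N k)) atTop (nhds 0)) :
    Tendsto (fun k => ∑ i ∈ Finset.range (N k),
      (m (i * h k) - A (i * h k))⁻¹ ^ 2 * gridInv m A (h k) i
        * ((m ((i + 1 : ℕ) * h k) - m (i * h k)) ^ 2
          - (Q ((i + 1 : ℕ) * h k) - Q (i * h k)))) atTop (nhds 0) := by
  have h_end : ∀ k, ∀ j ≤ N k, (j + 1 : ℕ) * h k ≤ T := fun k j hj =>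
    le_trans (by have := hh k; gcongr) (hT k)
  have h_step : ∀ k (j : ℕ), ∑ i ∈ Finset.range (j + 1), (m ((i + 1 : ℕ) * h k) - m (i * h k)) ^ 2
      - Q ((j + 1 : ℕ) * h k)
      - (∑ i ∈ Finset.range j, (m ((i + 1 : ℕ) * h k) - m (i * h k)) ^ 2 - Q (j * h k))
      = (m ((j + 1 : ℕ) * h k) - m (j * h k)) ^ 2 - (Q ((j + 1 : ℕ) * h k) - Q (j * h k)) :=
    fun k j => by rw [Finset.sum_range_succ]; ring
  have h_conv := tendsto_sum_mul_sub_zero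
    (w := fun k i => (m (i * h k) - A (i * h k))⁻¹ ^ 2 * gridInv m A (h k) i)
    (C := c⁻¹ ^ 2 * c⁻¹) (D := 2 * Q t - Q 0) (fun k j hj => ?_) (fun ε hε => ?_) hS (fun k => ?_)
  · simpa only [h_step] using h_conv
  · have := hh k
    have h_bound : (m (j * h k) - A (j * h k))⁻¹ ∈ Icc 0 c⁻¹ := inv_mem_Icc hc
      (hG _ ⟨by positivity, le_trans (by gcongr; exact j.le_succ) (h_end k j hj)⟩)
    have h_grid := gridInv_mem_Icc hA_mono hG (hh k) hc (h_end k j hj)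
    rw [abs_of_nonneg (mul_nonneg (sq_nonneg _) h_grid.1)]
    exact mul_le_mul (pow_le_pow_left₀ h_bound.1 h_bound.2 2) h_grid.2 h_grid.1 (by positivity)
  · obtain ⟨B, hB⟩ := exists_resetCount_inv_sq_mul_gridInv_le hm hA hA_mono hc hG hε
    exact ⟨B, fun k => hB (h k) (N k) (hh k) (hT k)⟩
  · simp only [h_step]
    refine (sum_abs_sq_sub_sub_le (m := m) hQ (hh k) (N k)).trans ?_
    rw [← hN k, add_sub_assoc]
    gcongr
    exact abs_le_runningMax (S := fun J =>
      ∑ i ∈ Finset.range J, (m ((i + 1 : ℕ) * h k) - m (i * h k)) ^ 2 - Q (J * h k)) le_rfl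

lemma mul_mem_Icc_of_le {k i : ℕ} (hh : ∀ k, 0 < h k) (hN : ∀ k, N k * h k = t) (ht : t ≤ T)
    (hi : i ≤ N k) : i * h k ∈ Icc 0 T := by
  have := hh k
  refine ⟨by positivity, le_trans ?_ ((hN k).trans_le ht)⟩
  gcongr

section GridSums

variable [IsLocallyFiniteMeasure ν] (hc : 0 < c) (hG : ∀ s ∈ Icc 0 T, c ≤ m s - A s)
  (hm : IsCadlagOn m T) (hA : IsCadlagOn A T) (hA_mono : Monotone A) (hh : ∀ k, 0 < h k)
  (h_lim : Tendsto h atTop (nhds 0)) (hN : ∀ k, N k * h k = t) (ht : t ≤ T)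
include hc hG hm hA hA_mono hh h_lim hN ht

lemma integrableOn_inv_sub_leftLim : IntegrableOn (fun u => (m u - leftLim A u)⁻¹) (Ioc 0 t) ν := by
  refine integrableOn_of_tendsto_cellIndex (F := fun k => gridInv m A (h k)) (C := c⁻¹) hh hN
    (fun k i hi => ?_)
    fun u hu => tendsto_gridInv_cellIndex hc hG hm hA hh h_lim (Ioc_subset_Ioc_right ht hu) hA_mono
  have h_grid := gridInv_mem_Icc hA_mono hG (hh k).le hc (mul_mem_Icc_of_le hh hN ht hi).2
  exact (abs_of_nonneg h_grid.1).trans_le h_grid.2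

lemma tendsto_sum_gridInv_mul_measureReal_sub_setIntegral :
    Tendsto (fun k => ∑ i ∈ Finset.range (N k),
      ((m (i * h k) - A (i * h k))⁻¹ ^ 2 * gridInv m A (h k) i
          * ν.real (Ioc (i * h k) ((i + 1 : ℕ) * h k))
        - (m (i * h k) - A (i * h k))⁻¹ ^ 2
          * ∫ u in Ioc (i * h k) ((i + 1 : ℕ) * h k), (m u - leftLim A u)⁻¹ ∂ν)) atTop
      (nhds 0) := by
  have h_left : ∀ k, ∀ i < N k, (m (i * h k) - A (i * h k))⁻¹ ∈ Icc 0 c⁻¹ := fun k i hi =>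
    inv_mem_Icc hc (hG _ (mul_mem_Icc_of_le hh hN ht hi.le))
  have h_grid : ∀ k, ∀ i < N k, gridInv m A (h k) i ∈ Icc 0 c⁻¹ := fun k i hi =>
    gridInv_mem_Icc hA_mono hG (hh k).le hc (mul_mem_Icc_of_le hh hN ht hi).2
  have h_sq : ∀ k, ∀ i < N k, |(m (i * h k) - A (i * h k))⁻¹ ^ 2| ≤ c⁻¹ ^ 2 := fun k i hi => by
    rw [abs_of_nonneg (sq_nonneg _)]
    exact pow_le_pow_left₀ (h_left k i hi).1 (h_left k i hi).2 2
  have h_lim_left : ∀ u ∈ Ioc 0 t, Tendsto (fun k => (m (cellIndex (h k) u * h k)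
      - A (cellIndex (h k) u * h k))⁻¹ ^ 2) atTop
      (nhds ((leftLim m u - leftLim A u)⁻¹ ^ 2)) := fun u hu =>
    (tendsto_inv_sub_cellIndex_mul hc hG hm hA hh h_lim (Ioc_subset_Ioc_right ht hu)).pow 2
  have h_real := tendsto_sum_mul_measureReal (ν := ν) (C := c⁻¹ ^ 2 * c⁻¹)
    (F := fun k i => (m (i * h k) - A (i * h k))⁻¹ ^ 2 * gridInv m A (h k) i) hh hN
    (fun k i hi => by
      rw [abs_mul, abs_of_nonneg (h_grid k i hi).1]
      exact mul_le_mul (h_sq k i hi) (h_grid k i hi).2 (h_grid k i hi).1 (by positivity))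
    (fun u hu => (h_lim_left u hu).mul
      (tendsto_gridInv_cellIndex hc hG hm hA hh h_lim (Ioc_subset_Ioc_right ht hu) hA_mono))
  have h_int := tendsto_sum_mul_setIntegral hh hN h_sq h_lim_left
    (integrableOn_inv_sub_leftLim (ν := ν) hc hG hm hA hA_mono hh h_lim hN ht)
  simpa only [Finset.sum_sub_distrib, sub_self] using h_real.sub h_int

lemma tendsto_sum_inv_mul_gridInv_mul_measureReal :
    Tendsto (fun k => ∑ i ∈ Finset.range (N k),
      (m ((i + 1 : ℕ) * h k) - A ((i + 1 : ℕ) * h k))⁻¹ * gridInv m A (h k) i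
        * ν.real (Ioc (i * h k) ((i + 1 : ℕ) * h k))) atTop
      (nhds (∫ u in Ioc 0 t, (m u - A u)⁻¹ * (m u - leftLim A u)⁻¹ ∂ν)) := by
  refine tendsto_sum_mul_measureReal (C := c⁻¹ * c⁻¹) (F := fun k i =>
    (m ((i + 1 : ℕ) * h k) - A ((i + 1 : ℕ) * h k))⁻¹ * gridInv m A (h k) i) hh hN
    (fun k i hi => ?_) fun u hu =>
      (tendsto_inv_sub_cellIndex_add_one_mul hc hG hm hA hh h_lim
        (Ioc_subset_Ioc_right ht hu)).mul
      (tendsto_gridInv_cellIndex hc hG hm hA hh h_lim (Ioc_subset_Ioc_right ht hu) hA_mono)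
  have h_end := mul_mem_Icc_of_le hh hN ht (k := k) (i := i + 1) hi
  have h_right := inv_mem_Icc hc (hG _ h_end)
  have h_grid := gridInv_mem_Icc hA_mono hG (hh k).le hc h_end.2
  rw [abs_of_nonneg (mul_nonneg h_right.1 h_grid.1)]
  exact mul_le_mul h_right.2 h_grid.2 h_grid.1 (inv_nonneg.2 hc.le)

end GridSums

lemma setIntegral_Ioc_sub_setIntegral_Ioc {f : ℝ → ℝ} {a b : ℝ} (hf : IntegrableOn f (Ioc 0 b) ν)
    (ha : 0 ≤ a) (hab : a ≤ b) :
    ∫ u in Ioc 0 b, f u ∂ν - ∫ u in Ioc 0 a, f u ∂ν = ∫ u in Ioc a b, f u ∂ν := by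
  rw [← Ioc_union_Ioc_eq_Ioc ha hab, setIntegral_union (Ioc_disjoint_Ioc_of_le le_rfl)
    measurableSet_Ioc (hf.mono_set (Ioc_subset_Ioc_right hab))
    (hf.mono_set (Ioc_subset_Ioc_left ha)), add_sub_cancel_left]

/-- Summed over the cells, the identity `inv_sub_inv_eq_of_eq_add` splits the increment of
`(m − A)⁻¹` into three sums with known limits and the Riemann sum of the stochastic integral. -/
lemma inv_sub_eq_of_tendsto {mt : ℝ → ℝ} {I : ℝ} {νA νQ : Measure ℝ} [IsLocallyFiniteMeasure νA]
    [IsLocallyFiniteMeasure νQ] (hc : 0 < c) (hG : ∀ s ∈ Icc 0 T, c ≤ m s - A s)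
    (hm : IsCadlagOn m T) (hA : IsCadlagOn A T) (hA_mono : Monotone A)
    (hνA : ∀ a b, a ≤ b → νA.real (Ioc a b) = A b - A a)
    (hνQ : ∀ a b, a ≤ b → νQ.real (Ioc a b) = Q b - Q a)
    (hmt : ∀ s, 0 ≤ s → mt s = m s - ∫ u in Ioc 0 s, (m u - leftLim A u)⁻¹ ∂νQ)
    (hh : ∀ k, 0 < h k) (h_lim : Tendsto h atTop (nhds 0)) (hN : ∀ k, N k * h k = t)
    (hT : ∀ k, (N k + 1 : ℕ) * h k ≤ T)
    (hS : Tendsto (fun k => runningMax (fun J => ∑ i ∈ Finset.range J,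
      (m ((i + 1 : ℕ) * h k) - m (i * h k)) ^ 2 - Q (J * h k)) (N k)) atTop (nhds 0))
    (hI : Tendsto (fun k => ∑ i ∈ Finset.range (N k), (m (i * h k) - A (i * h k))⁻¹ ^ 2
      * (mt ((i + 1 : ℕ) * h k) - mt (i * h k))) atTop (nhds I)) :
    (m t - A t)⁻¹ = (m 0 - A 0)⁻¹ - I
      + ∫ u in Ioc 0 t, (m u - A u)⁻¹ * (m u - leftLim A u)⁻¹ ∂νA := by
  have ht : t ≤ T := by
    rw [← hN 0]
    exact le_trans (by have := hh 0; gcongr; exact (N 0).le_succ) (hT 0)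
  have hQ : Monotone Q := fun a b hab => sub_nonneg.1 (by
    rw [← hνQ a b hab]; exact measureReal_nonneg)
  have h_lim_sum := (((tendsto_sum_inv_sq_mul_gridInv_mul_sub hc hG hm hA hA_mono hQ
    (fun k => (hh k).le) hN hT hS).add (tendsto_sum_gridInv_mul_measureReal_sub_setIntegral
      (ν := νQ) hc hG hm hA hA_mono hh h_lim hN ht)).add
    (tendsto_sum_inv_mul_gridInv_mul_measureReal (ν := νA) hc hG hm hA hA_mono hh h_lim hN ht)).sub
    hI
  have h_const := tendsto_nhds_unique tendsto_const_nhds (h_lim_sum.congr fun k => ?_)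
    (a := (m t - A t)⁻¹ - (m 0 - A 0)⁻¹)
  · linarith
  have h_tel := Finset.sum_range_sub (fun i : ℕ => (m (i * h k) - A (i * h k))⁻¹) (N k)
  rw [hN k, Nat.cast_zero, zero_mul] at h_tel
  rw [← h_tel, ← Finset.sum_add_distrib, ← Finset.sum_add_distrib, ← Finset.sum_sub_distrib]
  refine Finset.sum_congr rfl fun i hi => ?_
  have h_left := mul_mem_Icc_of_le hh hN le_rfl (Finset.mem_range.1 hi).le
  have h_right := mul_mem_Icc_of_le hh hN le_rfl (k := k) (i := i + 1) (Finset.mem_range.1 hi)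
  have h_le : i * h k ≤ (i + 1 : ℕ) * h k := by have := hh k; gcongr; exact i.le_succ
  have h_int : IntegrableOn (fun u => (m u - leftLim A u)⁻¹) (Ioc 0 ((i + 1 : ℕ) * h k)) νQ :=
    (integrableOn_inv_sub_leftLim hc hG hm hA hA_mono hh h_lim hN ht).mono_set
      (Ioc_subset_Ioc_right h_right.2)
  rw [hνQ _ _ h_le, hνA _ _ h_le, hmt _ h_right.1, hmt _ h_left.1, sub_sub_sub_comm,
    setIntegral_Ioc_sub_setIntegral_Ioc h_int h_left.1 h_le]
  exact (inv_sub_inv_eq_of_eq_add _ _ (hc.trans_le (hG _ ⟨h_left.1, h_left.2.trans ht⟩)).ne'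
    (hc.trans_le (hG _ ⟨h_right.1, h_right.2.trans ht⟩)).ne'
    (hc.trans_le (le_sub_of_add_one_mul_le hA_mono hG (hh k).le (h_right.2.trans ht))).ne'
    (by ring) (by ring)).symm

end Pathwise

section Decomposition

lemma continuousWithinAt_Ici_of_measureReal_Ioc {ν : Measure ℝ} [IsLocallyFiniteMeasure ν]
    {Q : ℝ → ℝ} {a : ℝ} (hν : ∀ b, a ≤ b → ν.real (Ioc a b) = Q b - Q a) :
    ContinuousWithinAt Q (Ici a) a := by
  have h_empty : ⋂ r > a, Ioc a r = ∅ := by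
    refine eq_empty_of_forall_notMem fun x hx => ?_
    have hxa := (mem_iInter₂.1 hx (a + 1) (by simp)).1
    obtain ⟨b, hab, hbx⟩ := exists_between hxa
    exact hbx.not_ge (mem_iInter₂.1 hx b hab).2
  have h_meas : Tendsto (fun r => ν (Ioc a r)) (nhdsWithin a (Ioi a)) (nhds 0) := by
    simpa only [h_empty, measure_empty, Function.comp_def] using
      tendsto_measure_biInter_gt (μ := ν) (s := Ioc a)
        (fun _ _ => measurableSet_Ioc.nullMeasurableSet) (fun _ _ _ h => Ioc_subset_Ioc_right h)
        ⟨a + 1, lt_add_one a, measure_Ioc_lt_top.ne⟩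
  have h_real := ((ENNReal.tendsto_toReal ENNReal.zero_ne_top).comp h_meas).add_const (Q a)
  rw [← continuousWithinAt_Ioi_iff_Ici]
  simp only [ENNReal.toReal_zero, zero_add] at h_real
  refine h_real.congr' ?_
  filter_upwards [self_mem_nhdsWithin] with r hr
  exact sub_eq_iff_eq_add.1 (hν r (le_of_lt hr)).symm |>.symm

lemma exists_seq_tendsto_ae_and {m0 : MeasurableSpace Ω} {μ : Measure Ω} {X Y : ℕ → Ω → ℝ}
    {x y : Ω → ℝ} (hX : TendstoInMeasure μ X atTop x) (hY : TendstoInMeasure μ Y atTop y) :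
    ∃ φ : ℕ → ℕ, Tendsto φ atTop atTop ∧ ∀ᵐ ω ∂μ,
      Tendsto (fun k => X (φ k) ω) atTop (nhds (x ω)) ∧
        Tendsto (fun k => Y (φ k) ω) atTop (nhds (y ω)) := by
  obtain ⟨φ, hφ, hXφ⟩ := hX.exists_seq_tendsto_ae
  obtain ⟨ψ, hψ, hYψ⟩ := (hY.comp hφ.tendsto_atTop).exists_seq_tendsto_ae
  refine ⟨φ ∘ ψ, hφ.tendsto_atTop.comp hψ.tendsto_atTop, ?_⟩
  filter_upwards [hXφ, hYψ] with ω hXω hYω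
  exact ⟨hXω.comp hψ.tendsto_atTop, hYω⟩

end Decomposition

/-- With `G = m − A^o > 0`, `G̃ = m − A^o_−`, `Γ = G̃⁻¹ • A^o` and
`m̃ = m − G̃⁻¹ • [m,m]`, the process `G⁻¹` satisfies the decomposition
`G⁻¹ = G₀⁻¹ − G₋⁻² • m̃ + G⁻¹ • Γ`, i.e. for all `t`
`1/G_t = 1/G_0 − ∫_(0,t] G_{s−}⁻² dm̃_s + ∫_(0,t] G_s⁻¹ G̃_s⁻¹ dA^o_s`. -/
theorem inverse_azema_supermartingale_decomposition
    {m0 : MeasurableSpace Ω} (μ : Measure Ω) [IsProbabilityMeasure μ]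
    (𝒻 : Filtration ℝ m0)
    (m Ao G Gt QV mt I : ℝ → Ω → ℝ)
    (νAo νQV : Ω → Measure ℝ)
    (hνAofin : ∀ ω, IsLocallyFiniteMeasure (νAo ω))
    (hνQVfin : ∀ ω, IsLocallyFiniteMeasure (νQV ω))
    (hm : Martingale m 𝒻 μ)
    (hmrc : ∀ ω t, ContinuousWithinAt (fun s => m s ω) (Ici t) t)
    (hAoadp : Adapted 𝒻 Ao)
    (hAomono : ∀ ω, Monotone fun t => Ao t ω)
    (hAorc : ∀ ω t, ContinuousWithinAt (fun s => Ao s ω) (Ici t) t)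
    (hνAo : ∀ ω, ∀ a b : ℝ, a ≤ b → (νAo ω (Ioc a b)).toReal = Ao b ω - Ao a ω)
    (hG : ∀ t ω, G t ω = m t ω - Ao t ω)
    (hGt : ∀ t ω, Gt t ω = m t ω - leftLim (fun s => Ao s ω) t)
    (hGpos : ∀ t ω, 0 < G t ω) (hGtpos : ∀ t ω, 0 < Gt t ω)
    -- `QV = [m,m]` and `νQV` is its pathwise Stieltjes measure:
    (hQV : IsQuadCovar μ m m QV)
    (hνQV : ∀ ω, ∀ a b : ℝ, a ≤ b → (νQV ω (Ioc a b)).toReal = QV b ω - QV a ω)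
    -- `m̃ = m − G̃⁻¹ • [m,m]`:
    (hmt : ∀ t ω, 0 ≤ t → mt t ω = m t ω - ∫ s in Ioc 0 t, (Gt s ω)⁻¹ ∂(νQV ω))
    -- `I = G₋⁻² • m̃`:
    (hI : IsStochInt μ (fun s ω => ((G s ω)⁻¹) ^ 2) mt I) :
    ∀ t : ℝ, 0 < t → ∀ᵐ ω ∂μ,
      (G t ω)⁻¹
        = (G 0 ω)⁻¹ - I t ω + ∫ s in Ioc 0 t, (G s ω)⁻¹ * (Gt s ω)⁻¹ ∂(νAo ω) := by
  intro t ht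
  -- Summation by parts on the grid of `[0, t]` uses `gridInv` one cell beyond `t`.
  have ht2 : 0 < 2 * t := by positivity
  have hAm : ∀ s ω, Ao s ω < m s ω := fun s ω => sub_pos.1 (by rw [← hG]; exact hGpos s ω)
  have hQV0 := isQuadCovar_ae_eq_zero hm hAoadp hAomono (fun s ω => (hAm s ω).le) hmrc hAorc hQV
    fun ω => continuousWithinAt_Ici_of_measureReal_Ioc fun b hb => hνQV ω 0 b hb
  have h_err := tendstoInMeasure_runningMax_sum_sq_sub hm hAoadp hAomono (fun s ω => (hAm s ω).le)
    hmrc hAorc hQV hQV0 ht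
  obtain ⟨φ, hφ, h_lim⟩ := exists_seq_tendsto_ae_and h_err
    (hI t ht (dyadicPartition ht.le 1 (by rw [Nat.cast_one, one_mul])))
  filter_upwards [h_lim, ae_exists_pos_forall_le_sub hm hAoadp hAomono hAm hmrc hAorc ht2,
    ae_isCadlagOn hm.submartingale hmrc ht2 (ae_exists_forall_abs_le hm hmrc ht2)]
    with ω ⟨h_errω, h_Iω⟩ ⟨c, hc, hcG⟩ hm_cadlag
  simp only [hG, hGt] at hmt h_Iω ⊢
  refine inv_sub_eq_of_tendsto (h := fun k => t / 2 ^ φ k) (N := fun k => 2 ^ φ k) hc hcG hm_cadlag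
    (.of_monotone (hAomono ω) (hAorc ω)) (hAomono ω) (hνAo ω) (hνQV ω) (hmt · ω)
    (fun k => by positivity) ((tendsto_div_two_pow t).comp hφ)
    (fun k => two_pow_mul_div_two_pow t (φ k))
    (fun k => two_pow_add_one_mul_div_two_pow_le ht.le (φ k)) h_errω ?_
  simpa only [leftSum, dyadicPartition, one_mul] using h_Iω
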